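/- arXiv:2008.00753 — 12 statements merged into one kernel-verified Lean document; each statement's English description precedes it below -/
import Mathlib

section
/- Let G be a finite connected simple graph and t a vertex. Let W₁ be a walk from x₁ to t of length dist(x₁,t) and W₂ a walk from x₂ to t of length dist(x₂,t) (two geodesics ending at t). Suppose u,v are adjacent vertices such that both W₁ and W₂ traverse the edge {u,v}. Then W₁ and W₂ traverse {u,v} in the same direction: u occurs immediately before v in W₁ if and only if u occurs immediately before v in W₂. -/
theorem geod_dart {V : Type*} (G : SimpleGraph V) (hG : G.Connected) {x t : V}
    (W : G.Walk x t) (h : W.length = G.dist x t) (d : G.Dart) (hd : d ∈ W.darts) :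
    G.dist d.fst t = G.dist d.snd t + 1 := by
  induction W with
  | nil => simp at hd
  | @cons a b c hab p ih =>
    have h1 : G.dist a c ≤ G.dist a b + G.dist b c := hG.dist_triangle
    have h2 : G.dist a b = 1 := SimpleGraph.dist_eq_one_iff_adj.mpr hab
    have h3 := SimpleGraph.dist_le p
    rw [SimpleGraph.Walk.length_cons] at h
    rw [SimpleGraph.Walk.darts_cons, List.mem_cons] at hd
    rcases hd with rfl | hd
    · show G.dist a c = G.dist b c + 1
      omega
    · exact ih (by omega) hd

theorem geod_iff {V : Type*} (G : SimpleGraph V) (hG : G.Connected) {x t u v : V}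
    (W : G.Walk x t) (h : W.length = G.dist x t) (he : s(u, v) ∈ W.edges) :
    (∃ d ∈ W.darts, SimpleGraph.Dart.toProd d = (u, v)) ↔
      G.dist u t = G.dist v t + 1 := by
  constructor
  · rintro ⟨d, hd, hp⟩
    have := geod_dart G hG W h d hd
    rwa [hp] at this
  · intro huv
    rw [SimpleGraph.Walk.edges, List.mem_map] at he
    obtain ⟨d, hd, hp⟩ := he
    rcases SimpleGraph.dart_edge_eq_mk'_iff.mp hp with hp | hp
    · exact ⟨d, hd, hp⟩
    · have := geod_dart G hG W h d hd
      rw [hp] at this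
      simp only [Prod.swap_prod_mk] at this
      omega

/-- Two geodesic walks `W₁`, `W₂` ending at the same vertex `t` that both
traverse an edge `{u,v}` traverse it in the same direction: `u` occurs immediately
before `v` in `W₁` iff it does in `W₂`. -/
theorem stmt_3 {V : Type*} [Fintype V] (G : SimpleGraph V) (hG : G.Connected)
    (t x₁ x₂ u v : V) (huv : G.Adj u v)
    (W₁ : G.Walk x₁ t) (W₂ : G.Walk x₂ t)
    (h₁ : W₁.length = G.dist x₁ t) (h₂ : W₂.length = G.dist x₂ t)
    (he₁ : s(u, v) ∈ W₁.edges) (he₂ : s(u, v) ∈ W₂.edges) :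
    ((∃ d ∈ W₁.darts, SimpleGraph.Dart.toProd d = (u, v)) ↔
      (∃ d ∈ W₂.darts, SimpleGraph.Dart.toProd d = (u, v))) := by
  rw [geod_iff G hG W₁ h₁ he₁, geod_iff G hG W₂ h₂ he₂]
end

section
/- Let G be a finite connected simple graph with vertex set V of size γ ≥ 2 and δ edges, and let g : V → ℕ satisfy: p_a := (∑_{v∈V} g(v)) + δ − γ + 1 ≥ 2, and every vertex v with g(v) = 0 has deg(v) ≥ 3. Define η(v) = (g(v) − 1 + deg(v)/2)/(p_a − 1). Then: (1) 0 < η(v) < 1 for every v and ∑_{v∈V} η(v) = 1 (so η is a polarization); (2) λ_η(v) := 1 − g(v) − η(v)·(1 − p_a) equals deg(v)/2 for every v; (3) for every depth-one datum (r,s,a,b) on G one has (∑_{v∈V} r(v)·λ_η(v)) − ∑_e s(e) = (1/2)·∑_e (a(e)+b(e)); in particular this quantity is ≥ 0, with equality if and only if a(e) = b(e) = 0 for every edge e. -/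
open Finset

/-- A depth-one datum on a graph `G` (encoding a depth one sheaf on a nodal curve with
dual graph `G`): ranks `r` on vertices (components), and at each edge (node) `e` the
free rank `s e` of the stalk and torsion parts `a v e` attached to each endpoint `v`
of `e`, subject to the compatibility `r v = s e + a v e` for `v` an endpoint of `e`.
For an edge `e` with chosen endpoints `u_e, v_e`, the paper's `a(e)`, `b(e)` are
`a u_e e` and `a v_e e`. -/
structure DepthOneDatum {V : Type*} (G : SimpleGraph V) where
  r : V → ℕ
  s : Sym2 V → ℕ
  a : V → Sym2 V → ℕ
  compat : ∀ e ∈ G.edgeSet, ∀ v ∈ e, r v = s e + a v e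

variable {V : Type*} [Fintype V] [DecidableEq V]

/-- The defect `Δ = (∑ v, r v · λ v) − ∑ e, s e` of a depth-one datum
(equal to `Δ_w(E) = wdeg E − ∑ deg E_i` for the corresponding sheaf). -/
def DepthOneDatum.defect {G : SimpleGraph V} [DecidableRel G.Adj]
    (lam : V → ℚ) (D : DepthOneDatum G) : ℚ :=
  (∑ v : V, (D.r v : ℚ) * lam v) - ∑ e ∈ G.edgeFinset, (D.s e : ℚ)

/-- The residual rank `t_e = a(e) + b(e)` of a depth-one datum at an edge `e`. -/
def DepthOneDatum.tRes {G : SimpleGraph V} (D : DepthOneDatum G) (e : Sym2 V) : ℚ :=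
  Sym2.lift ⟨fun x y => (D.a x e : ℚ) + (D.a y e : ℚ), fun _ _ => add_comm _ _⟩ e

/-- A depth-one datum is locally free when all torsion parts `a`, `b` vanish at all edges. -/
def DepthOneDatum.LocFree {G : SimpleGraph V} (D : DepthOneDatum G) : Prop :=
  ∀ e ∈ G.edgeSet, ∀ v ∈ e, D.a v e = 0

/-- `N(B)`: the number of edges of `G` with both endpoints in `B`. -/
def insideCount (G : SimpleGraph V) [DecidableRel G.Adj] (B : Finset V) : ℕ :=
  (G.edgeFinset.filter (fun e => e ∈ B.sym2)).card

/-- `δ_B`: the number of edges of `G` with exactly one endpoint in `B`. -/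
def crossCount (G : SimpleGraph V) [DecidableRel G.Adj] (B : Finset V) : ℕ :=
  (G.edgeFinset.filter (fun e => e ∉ B.sym2 ∧ e ∉ Bᶜ.sym2)).card

/-- `Δ_w(O_B) = (∑_{v ∈ B} λ v) − N(B)`. -/
def DeltaO (G : SimpleGraph V) [DecidableRel G.Adj] (lam : V → ℚ) (B : Finset V) : ℚ :=
  (∑ v ∈ B, lam v) - (insideCount G B : ℚ)

theorem sum_mul_degree_aux (G : SimpleGraph V) [DecidableRel G.Adj] (f : V → ℚ) :
    ∑ v, f v * (G.degree v : ℚ)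
      = ∑ e ∈ G.edgeFinset, ∑ v, (if v ∈ e then f v else 0) := by
  rw [Finset.sum_comm]
  refine Finset.sum_congr rfl fun v _ => ?_
  rw [← Finset.sum_filter, Finset.sum_const, ← G.incidenceFinset_eq_filter,
    G.card_incidenceFinset_eq_degree, nsmul_eq_mul, mul_comm]

theorem sum_ends_aux (x y : V) (h : x ≠ y) (f : V → ℚ) :
    ∑ v, (if v ∈ s(x, y) then f v else 0) = f x + f y := by
  rw [← Finset.sum_filter, ← Finset.sum_pair h]
  congr 1
  ext v
  simp

/-- the canonical polarization `η` of a stable dual graph is a polarization,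
its `λ_η` equals `deg v / 2`, and every depth-one datum has defect `(1/2)·∑ t_e ≥ 0`,
with equality iff the datum is locally free. -/
theorem stmt_7 (G : SimpleGraph V) [DecidableRel G.Adj]
    (hG : G.Connected) (hγ : 2 ≤ Fintype.card V)
    (g : V → ℕ) (pa : ℚ)
    (hpa : pa = (∑ v, (g v : ℚ)) + (G.edgeFinset.card : ℚ) - (Fintype.card V : ℚ) + 1)
    (hpa2 : 2 ≤ pa)
    (hstable : ∀ v, g v = 0 → 3 ≤ G.degree v)
    (η : V → ℚ)
    (hη : ∀ v, η v = ((g v : ℚ) - 1 + (G.degree v : ℚ) / 2) / (pa - 1)) :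
    (∀ v, 0 < η v ∧ η v < 1) ∧ (∑ v, η v = 1)
    ∧ (∀ v, 1 - (g v : ℚ) - η v * (1 - pa) = (G.degree v : ℚ) / 2)
    ∧ (∀ D : DepthOneDatum G,
        D.defect (fun v => 1 - (g v : ℚ) - η v * (1 - pa))
            = (1 / 2) * ∑ e ∈ G.edgeFinset, D.tRes e
        ∧ 0 ≤ D.defect (fun v => 1 - (g v : ℚ) - η v * (1 - pa))
        ∧ (D.defect (fun v => 1 - (g v : ℚ) - η v * (1 - pa)) = 0 ↔ D.LocFree)) := by
  have hp : (0 : ℚ) < pa - 1 := by linarith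
  have : Nontrivial V := Fintype.one_lt_card_iff_nontrivial.mp hγ
  have hpos : ∀ v, 0 < η v := by
    intro v
    rw [hη]
    refine div_pos ?_ hp
    have hd : 0 < G.degree v := hG.preconnected.degree_pos_of_nontrivial v
    have hd' : (1 : ℚ) ≤ G.degree v := by exact_mod_cast hd
    rcases Nat.eq_zero_or_pos (g v) with h | h
    · have h3 : (3 : ℚ) ≤ G.degree v := by exact_mod_cast hstable v h
      rw [h]; push_cast; linarith
    · have h1 : (1 : ℚ) ≤ g v := by exact_mod_cast h
      linarith
  have hdeg : ∑ v, (G.degree v : ℚ) = 2 * (G.edgeFinset.card : ℚ) := by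
    exact_mod_cast G.sum_degrees_eq_twice_card_edges
  have hsum : ∑ v, η v = 1 := by
    simp_rw [hη]
    rw [← Finset.sum_div, Finset.sum_add_distrib, Finset.sum_sub_distrib, ← Finset.sum_div, hdeg,
      div_eq_one_iff_eq hp.ne', hpa]
    simp
    ring
  have hlam : ∀ v, 1 - (g v : ℚ) - η v * (1 - pa) = (G.degree v : ℚ) / 2 := by
    intro v
    have : η v * (pa - 1) = (g v : ℚ) - 1 + (G.degree v : ℚ) / 2 := by
      rw [hη, div_mul_cancel₀ _ hp.ne']
    linarith
  have hnn : ∀ D : DepthOneDatum G, ∀ e, 0 ≤ D.tRes e := by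
    intro D e
    induction e with
    | _ x y =>
      simp only [DepthOneDatum.tRes, Sym2.lift_mk]
      positivity
  refine ⟨fun v => ⟨hpos v, ?_⟩, hsum, hlam, fun D => ?_⟩
  · obtain ⟨w, hw⟩ := exists_ne v
    rw [← hsum]
    exact Finset.single_lt_sum hw (Finset.mem_univ v) (Finset.mem_univ w) (hpos w)
      fun k _ _ => (hpos k).le
  · have key : D.defect (fun v => 1 - (g v : ℚ) - η v * (1 - pa))
            = (1 / 2) * ∑ e ∈ G.edgeFinset, D.tRes e := by
      have h1 : ∑ v, (D.r v : ℚ) * (1 - (g v : ℚ) - η v * (1 - pa))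
          = (1 / 2) * ∑ v, (D.r v : ℚ) * (G.degree v : ℚ) := by
        rw [Finset.mul_sum]
        refine Finset.sum_congr rfl fun v _ => ?_
        rw [hlam]; ring
      rw [DepthOneDatum.defect, h1, sum_mul_degree_aux, Finset.mul_sum, Finset.mul_sum,
        ← Finset.sum_sub_distrib]
      refine Finset.sum_congr rfl fun e he => ?_
      rw [SimpleGraph.mem_edgeFinset] at he
      induction e with
      | _ x y =>
        have hxy : x ≠ y := G.ne_of_adj he
        rw [sum_ends_aux x y hxy, D.compat _ he x (by simp), D.compat _ he y (by simp)]
        simp only [DepthOneDatum.tRes, Sym2.lift_mk]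
        push_cast
        ring
    refine ⟨key, ?_, ?_⟩
    · rw [key]
      exact mul_nonneg (by norm_num) (Finset.sum_nonneg fun e _ => hnn D e)
    · rw [key, mul_eq_zero, Finset.sum_eq_zero_iff_of_nonneg fun e _ => hnn D e]
      have h2 : ¬ ((1 : ℚ) / 2 = 0) := by norm_num
      simp only [h2, false_or, DepthOneDatum.LocFree, SimpleGraph.mem_edgeFinset]
      refine forall_congr' fun e => forall_congr' fun _ => ?_
      induction e with
      | _ x y =>
        simp only [DepthOneDatum.tRes, Sym2.lift_mk, Sym2.mem_iff, forall_eq_or_imp, forall_eq]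
        norm_cast
        omega
end

section
/- Let G be a finite connected simple graph, t a fixed vertex, and suppose given a system of minimal paths to t: for each vertex v a path p(v) from v to t of length dist(v,t), such that whenever a vertex u lies on p(v), the portion of p(v) from u to t equals p(u). For an edge e let A_e = { v ∈ V : e is an edge of p(v) }. Then for every edge e with A_e ≠ ∅: (a) t ∉ A_e (so A_e is a proper subset of V) and the subgraph induced on A_e is connected; (b) the subgraph induced on V ∖ A_e is connected. -/
/-- given a system of minimal paths `p` to `t` (each `p v` is a geodesic
walk from `v` to `t`, compatible under restriction), for every edge `e` the set
`A_e = {v | e lies on p v}`, if nonempty, does not contain `t`, induces a connected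
subgraph, and its complement induces a connected subgraph. -/
theorem stmt_9 {V : Type*} [Fintype V] [DecidableEq V] (G : SimpleGraph V)
    (hG : G.Connected) (t : V) (p : ∀ v : V, G.Walk v t)
    (hmin : ∀ v, (p v).length = G.dist v t)
    (hres : ∀ (v u : V) (h : u ∈ (p v).support), (p v).dropUntil u h = p u)
    (e : Sym2 V) (hne : {v : V | e ∈ (p v).edges}.Nonempty) :
    t ∉ {v : V | e ∈ (p v).edges}
    ∧ (G.induce {v : V | e ∈ (p v).edges}).Connected
    ∧ (G.induce ({v : V | e ∈ (p v).edges}ᶜ)).Connected := by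
  have hpt : p t = .nil := by
    have h := hmin t
    rw [SimpleGraph.dist_self] at h
    cases hq : p t with
    | nil => rfl
    | cons h1 q => simp [hq] at h
  have step : ∀ v, v ≠ t → ∃ (w : V) (h : G.Adj v w), p v = .cons h (p w) := by
    intro v hv
    cases hp : p v with
    | nil => exact absurd rfl hv
    | @cons _ w _ h q =>
      refine ⟨w, h, ?_⟩
      have hm : w ∈ (p v).support := by rw [hp]; simp
      have := hres v w hm
      rw [← this]
      simp [hp, SimpleGraph.Walk.dropUntil, h.ne, SimpleGraph.Walk.dropUntil_first]
  have ht : t ∉ {v : V | e ∈ (p v).edges} := by simp [hpt]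
  refine ⟨ht, ?_, ?_⟩
  · have key : ∀ (n : ℕ) (v : V) (hv : v ∈ {v : V | e ∈ (p v).edges}), (p v).length = n →
        ∃ (r : V) (hr : r ∈ {v : V | e ∈ (p v).edges}) (w : V),
          e = s(r, w) ∧ (p r).length = (p w).length + 1 ∧
          (G.induce {v : V | e ∈ (p v).edges}).Reachable ⟨v, hv⟩ ⟨r, hr⟩ := by
      intro n
      induction n with
      | zero =>
        intro v hv hl
        have : v ≠ t := fun h => ht (h ▸ hv)
        obtain ⟨w, h, hp⟩ := step v this
        simp [hp] at hl
      | succ n ih =>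
        intro v hv hl
        have : v ≠ t := fun h => ht (h ▸ hv)
        obtain ⟨w, h, hp⟩ := step v this
        have hl2 : (p v).length = (p w).length + 1 := by rw [hp]; simp
        have hv2 := hv
        simp only [Set.mem_ofPred_eq, hp, SimpleGraph.Walk.edges_cons, List.mem_cons] at hv2
        rcases hv2 with he | hw
        · exact ⟨v, hv, w, he, hl2, .refl _⟩
        · obtain ⟨r, hr, x, h1, h2, h3⟩ := ih w hw (by omega)
          refine ⟨r, hr, x, h1, h2, .trans (SimpleGraph.Adj.reachable ?_) h3⟩
          exact h
    refine (SimpleGraph.connected_iff _).mpr ⟨?_, hne.to_subtype⟩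
    rintro ⟨u, hu⟩ ⟨v, hv⟩
    obtain ⟨r, hr, w, h1, h2, h3⟩ := key _ u hu rfl
    obtain ⟨r', hr', w', h1', h2', h3'⟩ := key _ v hv rfl
    have hrr : r = r' := by
      rw [h1, Sym2.eq_iff] at h1'
      rcases h1' with ⟨h, _⟩ | ⟨ha, hb⟩
      · exact h
      · subst ha hb
        omega
    subst hrr
    exact h3.trans h3'.symm
  · have key : ∀ (n : ℕ) (v : V) (hv : v ∈ {v : V | e ∈ (p v).edges}ᶜ), (p v).length = n →
        (G.induce ({v : V | e ∈ (p v).edges}ᶜ)).Reachable ⟨v, hv⟩ ⟨t, ht⟩ := by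
      intro n
      induction n with
      | zero =>
        intro v hv hl
        have : v = t := SimpleGraph.Walk.eq_of_length_eq_zero hl
        subst this
        exact .refl _
      | succ n ih =>
        intro v hv hl
        by_cases hvt : v = t
        · subst hvt
          exact .refl _
        obtain ⟨w, h, hp⟩ := step v hvt
        have hl2 : (p v).length = (p w).length + 1 := by rw [hp]; simp
        have hw : w ∈ {v : V | e ∈ (p v).edges}ᶜ := by
          intro hw
          apply hv
          simp only [Set.mem_ofPred_eq, hp, SimpleGraph.Walk.edges_cons, List.mem_cons]
          exact Or.inr hw
        refine .trans (SimpleGraph.Adj.reachable ?_) (ih w hw (by omega))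
        exact h
    refine (SimpleGraph.connected_iff _).mpr ⟨?_, ⟨⟨t, ht⟩⟩⟩
    rintro ⟨u, hu⟩ ⟨v, hv⟩
    exact (key _ u hu rfl).trans (key _ v hv rfl).symm
end

section
/- Let G be a finite connected simple graph with vertex set V of size γ ≥ 2 and δ edges, g : V → ℕ, w : V → ℚ with 0 < w(v) < 1 and ∑ w(v) = 1; set p_a = (∑ g(v)) + δ − γ + 1, λ(v) = 1 − g(v) − w(v)·(1 − p_a), and Δ_w(O_B) = (∑_{v∈B} λ(v)) − N(B) for B ⊆ V. Fix a vertex t and a system of minimal paths p to t; let A_e = { v : e is an edge of p(v) } and M' = { e : A_e ≠ ∅ }. For e ∈ M' write its endpoints as u_e, v_e with dist(u_e,t) = dist(v_e,t) + 1 (this is well defined). Let (r,s,a,b) be a depth-one datum on G whose orientation at each e ∈ M' attaches a(e) to u_e and b(e) to v_e. Then (∑_{v∈V} r(v)·λ(v)) − ∑_e s(e) = ∑_{e∈M'} [ a(e)·( (1 − δ_{A_e})/2 + Δ_w(O_{A_e}) ) + b(e)·( (1 + δ_{A_e})/2 − Δ_w(O_{A_e}) ) ] + (1/2)·∑_{e∉M'}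 (a(e) + b(e)). -/
open Finset

variable {V : Type*} [Fintype V] [DecidableEq V]

theorem aux_deg (G : SimpleGraph V) [DecidableRel G.Adj] (h : V → ℚ) :
    ∑ e ∈ G.edgeFinset, ∑ v ∈ e.toFinset, h v = ∑ v, (G.degree v : ℚ) * h v := by
  rw [Finset.sum_comm' (t' := Finset.univ) (s' := fun v => G.incidenceFinset v)]
  · refine Finset.sum_congr rfl fun v _ => ?_
    rw [Finset.sum_const, SimpleGraph.card_incidenceFinset_eq_degree, nsmul_eq_mul]
  · intro e v
    simp [SimpleGraph.incidenceFinset_eq_filter]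

theorem aux_pair (G : SimpleGraph V) (h : V → ℚ) (x y : V) (hxy : G.Adj x y) :
    ∑ v ∈ (s(x, y) : Sym2 V).toFinset, h v = h x + h y := by
  have : (s(x, y) : Sym2 V).toFinset = {x, y} := by
    ext v; simp
  rw [this, Finset.sum_pair hxy.ne]

theorem aux_count (G : SimpleGraph V) [DecidableRel G.Adj] (B : Finset V) :
    ∑ v ∈ B, (G.degree v : ℚ) = 2 * (insideCount G B : ℚ) + (crossCount G B : ℚ) := by
  have h1 := aux_deg G (fun v => if v ∈ B then 1 else 0)
  simp only [mul_ite, mul_one, mul_zero, Finset.sum_ite_mem, Finset.univ_inter] at h1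
  rw [← h1]
  unfold insideCount crossCount
  rw [Finset.card_filter, Finset.card_filter]
  push_cast
  rw [Finset.mul_sum, ← Finset.sum_add_distrib]
  refine Finset.sum_congr rfl fun e he => ?_
  induction e using Sym2.ind with
  | _ x y =>
    have hxy : G.Adj x y := by simpa using he
    have h2 := aux_pair G (fun v => if v ∈ B then 1 else 0) x y hxy
    simp only [Finset.sum_ite_mem] at h2
    rw [h2]
    by_cases hx : x ∈ B <;> by_cases hy : y ∈ B <;> simp [hx, hy] <;> norm_num

theorem aux_tele (G : SimpleGraph V) (hG : G.Connected) (r : V → ℚ)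
    (uE vE : Sym2 V → V) {v t : V} (q : G.Walk v t) (hq : q.length = G.dist v t)
    (he : ∀ e ∈ q.edges, e = s(uE e, vE e) ∧ G.dist (uE e) t = G.dist (vE e) t + 1) :
    (q.edges.map (fun e => r (uE e) - r (vE e))).sum = r v - r t := by
  induction q with
  | nil => simp
  | @cons a b c h q ih =>
    have h1 : G.dist b c ≤ q.length := SimpleGraph.dist_le q
    have h2 : G.dist a c ≤ G.dist a b + G.dist b c := hG.dist_triangle
    have h3 : G.dist a b = 1 := SimpleGraph.dist_eq_one_iff_adj.2 h
    simp only [SimpleGraph.Walk.length_cons] at hq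
    have h4 := ih (by omega) (fun e hh => he e (by simp [hh]))
    obtain ⟨h5, h6⟩ := he s(a, b) (by simp)
    simp only [SimpleGraph.Walk.edges_cons, List.map_cons, List.sum_cons, h4]
    rcases Sym2.eq_iff.1 h5 with ⟨e1, e2⟩ | ⟨e1, e2⟩
    · rw [← e1, ← e2]; ring
    · rw [← e1, ← e2] at h6; omega

/-- the general formula of Theorem 3.7 for the defect of a depth-one
datum in terms of the subcurves `A_e` attached to a system of minimal paths to `t`,
where at each edge `e` with `A_e ≠ ∅` the endpoint `u_e` is the one farther from `t`
(`dist u_e t = dist v_e t + 1`) and carries `a(e) = D.a (uE e) e`,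
`b(e) = D.a (vE e) e`. -/
theorem stmt_10 (G : SimpleGraph V) [DecidableRel G.Adj]
    (hG : G.Connected) (hγ : 2 ≤ Fintype.card V)
    (g : V → ℕ) (w : V → ℚ) (hw : ∀ v, 0 < w v ∧ w v < 1) (hwsum : ∑ v, w v = 1)
    (pa : ℚ)
    (hpa : pa = (∑ v, (g v : ℚ)) + (G.edgeFinset.card : ℚ) - (Fintype.card V : ℚ) + 1)
    (lam : V → ℚ) (hlam : ∀ v, lam v = 1 - (g v : ℚ) - w v * (1 - pa))
    (t : V) (p : ∀ v : V, G.Walk v t)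
    (hmin : ∀ v, (p v).length = G.dist v t)
    (hres : ∀ (v u : V) (h : u ∈ (p v).support), (p v).dropUntil u h = p u)
    (A : Sym2 V → Finset V) (hA : ∀ e v, v ∈ A e ↔ e ∈ (p v).edges)
    (uE vE : Sym2 V → V)
    (hends : ∀ e ∈ G.edgeFinset, (A e).Nonempty →
      e = s(uE e, vE e) ∧ G.dist (uE e) t = G.dist (vE e) t + 1)
    (D : DepthOneDatum G) :
    D.defect lam
      = (∑ e ∈ G.edgeFinset.filter (fun e => (A e).Nonempty),
          ((D.a (uE e) e : ℚ) * ((1 - (crossCount G (A e) : ℚ)) / 2 + DeltaO G lam (A e))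
            + (D.a (vE e) e : ℚ) *
              ((1 + (crossCount G (A e) : ℚ)) / 2 - DeltaO G lam (A e))))
        + (1 / 2) * ∑ e ∈ G.edgeFinset.filter (fun e => ¬ (A e).Nonempty), D.tRes e := by
  classical
  set mu : V → ℚ := fun v => lam v - (G.degree v : ℚ) / 2 with hmu
  set f : Sym2 V → ℚ := fun e => (D.r (uE e) : ℚ) - (D.r (vE e) : ℚ) with hf
  have hD : ∀ B, DeltaO G lam B - (crossCount G B : ℚ) / 2 = ∑ v ∈ B, mu v := by
    intro B
    have := aux_count G B
    simp only [hmu, DeltaO, Finset.sum_sub_distrib, ← Finset.sum_div]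
    linarith
  have hdeg : ∑ v, (G.degree v : ℚ) = 2 * (G.edgeFinset.card : ℚ) := by
    exact_mod_cast G.sum_degrees_eq_twice_card_edges
  have hmu0 : ∑ v, mu v = 0 := by
    simp only [hmu, hlam, Finset.sum_sub_distrib, ← Finset.sum_div, ← Finset.sum_mul, hwsum, hdeg]
    simp only [Finset.sum_const, Finset.card_univ, nsmul_eq_mul, hpa]
    ring
  have htr : ∀ e ∈ G.edgeFinset,
      D.tRes e = ∑ v ∈ e.toFinset, (D.r v : ℚ) - 2 * (D.s e : ℚ) := by
    intro e he
    induction e using Sym2.ind with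
    | _ x y =>
      have hxy : G.Adj x y := by simpa using he
      rw [aux_pair G (fun v => (D.r v : ℚ)) x y hxy]
      have h1 := D.compat s(x, y) (by simpa using he) x (by simp)
      have h2 := D.compat s(x, y) (by simpa using he) y (by simp)
      simp only [DepthOneDatum.tRes, Sym2.lift_mk, h1, h2]
      push_cast
      ring
  have hterm : ∀ e ∈ G.edgeFinset.filter (fun e => (A e).Nonempty),
      ((D.a (uE e) e : ℚ) * ((1 - (crossCount G (A e) : ℚ)) / 2 + DeltaO G lam (A e))
            + (D.a (vE e) e : ℚ) *
              ((1 + (crossCount G (A e) : ℚ)) / 2 - DeltaO G lam (A e)))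
        = (∑ v ∈ A e, f e * mu v) + (1 / 2) * D.tRes e := by
    intro e he
    obtain ⟨he1, he2⟩ := Finset.mem_filter.1 he
    obtain ⟨h3, -⟩ := hends e he1 he2
    have hm : e ∈ G.edgeSet := by simpa using he1
    have h1 := D.compat e hm (uE e) (Sym2.mem_iff_exists.2 ⟨vE e, h3⟩)
    have h2 := D.compat e hm (vE e) (Sym2.mem_iff_exists.2 ⟨uE e, h3.trans Sym2.eq_swap⟩)
    have h4 : D.tRes e = (D.a (uE e) e : ℚ) + (D.a (vE e) e : ℚ) := by
      have : ∀ e' : Sym2 V, ∀ x y, e' = s(x, y) →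
          D.tRes e' = (D.a x e' : ℚ) + (D.a y e' : ℚ) := by
        rintro _ x y rfl; rfl
      exact this _ _ _ h3
    rw [← Finset.mul_sum, ← hD, h4]
    simp only [hf, h1, h2]
    push_cast
    ring
  rw [Finset.sum_congr rfl hterm, Finset.sum_add_distrib, ← Finset.mul_sum, add_assoc, ← mul_add,
    Finset.sum_filter_add_sum_filter_not, Finset.sum_congr rfl htr, Finset.sum_sub_distrib,
    aux_deg, ← Finset.mul_sum]
  have hsum : ∑ e ∈ G.edgeFinset.filter (fun e => (A e).Nonempty), ∑ v ∈ A e, f e * mu v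
      = ∑ v, ((D.r v : ℚ) - (D.r t : ℚ)) * mu v := by
    rw [Finset.sum_comm' (t' := Finset.univ) (s' := fun v => (p v).edges.toFinset)]
    · refine Finset.sum_congr rfl fun v _ => ?_
      rw [← Finset.sum_mul]
      congr 1
      have hnd : (p v).edges.Nodup :=
        ((p v).isPath_of_length_eq_dist (hmin v)).isTrail.edges_nodup
      rw [List.sum_toFinset _ hnd]
      refine aux_tele G hG (fun v => (D.r v : ℚ)) uE vE (p v) (hmin v) fun e he => ?_
      exact hends e (by simpa using (p v).edges_subset_edgeSet he) ⟨v, (hA e v).2 he⟩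
    · intro e v
      simp only [Finset.mem_filter, Finset.mem_univ, and_true, List.mem_toFinset, hA]
      constructor
      · exact fun h => h.2
      · exact fun h => ⟨⟨by simpa using (p v).edges_subset_edgeSet h, ⟨v, (hA e v).2 h⟩⟩, h⟩
  rw [hsum]
  simp only [sub_mul, Finset.sum_sub_distrib, ← Finset.mul_sum, hmu0]
  simp only [hmu, mul_sub, Finset.sum_sub_distrib, DepthOneDatum.defect]
  have : ∑ v, (D.r v : ℚ) * ((G.degree v : ℚ) / 2)
      = (1 / 2) * ∑ v, (G.degree v : ℚ) * (D.r v : ℚ) := by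
    rw [Finset.mul_sum]
    exact Finset.sum_congr rfl fun v _ => by ring
  rw [this]
  ring
end

section
/- Let G be a finite connected simple graph with vertex set V of size γ ≥ 2 and δ edges, g : V → ℕ, w : V → ℚ with 0 < w(v) < 1 and ∑ w(v) = 1; set p_a = (∑ g(v)) + δ − γ + 1, λ(v) = 1 − g(v) − w(v)·(1 − p_a), and Δ_w(O_B) = (∑_{v∈B} λ(v)) − N(B) for B ⊆ V. Fix a vertex t and a system of minimal paths p to t, and let A_e = { v : e is an edge of p(v) }. If for every edge e with A_e ≠ ∅ one has (δ_{A_e} − 1)/2 < Δ_w(O_{A_e}) < (δ_{A_e} + 1)/2, then w is numerically good: every depth-one datum (r,s,a,b) on G has defect Δ = (∑_{v∈V} r(v)·λ(v)) − ∑_e s(e) ≥ 0, with Δ = 0 if and only if a(e) = b(e) = 0 for every edge e. -/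
open Finset

variable {V : Type*} [Fintype V] [DecidableEq V]

/-- Sum of `f` over the two endpoints of `e`. -/
def endSum (f : V → ℚ) (e : Sym2 V) : ℚ := ∑ v : V, if v ∈ e then f v else 0

/-- The degree of `v`, as a rational number. -/
def dg (G : SimpleGraph V) [DecidableRel G.Adj] (v : V) : ℚ :=
  ∑ e ∈ G.edgeFinset, if v ∈ e then 1 else 0

lemma endSum_mk (f : V → ℚ) {x y : V} (h : x ≠ y) : endSum f s(x, y) = f x + f y := by
  unfold endSum
  rw [← Finset.sum_filter]
  have : (Finset.univ.filter fun v => v ∈ s(x, y)) = {x, y} := by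
    ext v; simp
  rw [this, Finset.sum_pair h]

lemma sum_mul_dg (G : SimpleGraph V) [DecidableRel G.Adj] (f : V → ℚ) :
    ∑ v, f v * dg G v = ∑ e ∈ G.edgeFinset, endSum f e := by
  unfold dg endSum
  rw [Finset.sum_comm]
  refine Finset.sum_congr rfl fun v _ => ?_
  rw [Finset.mul_sum]
  refine Finset.sum_congr rfl fun e _ => ?_
  split_ifs <;> simp

lemma sum_dg (G : SimpleGraph V) [DecidableRel G.Adj] (B : Finset V) :
    ∑ v ∈ B, dg G v = 2 * (insideCount G B : ℚ) + crossCount G B := by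
  have h := sum_mul_dg G (fun v => if v ∈ B then 1 else 0)
  simp only [ite_mul, one_mul, zero_mul, Finset.sum_ite_mem, Finset.univ_inter] at h
  rw [h, insideCount, crossCount, Finset.card_filter, Finset.card_filter]
  push_cast
  rw [Finset.mul_sum, ← Finset.sum_add_distrib]
  refine Finset.sum_congr rfl fun e he => ?_
  induction e with
  | _ x y =>
    have hxy : x ≠ y := by
      have : G.Adj x y := by simpa using he
      exact this.ne
    rw [endSum_mk _ hxy]
    by_cases hx : x ∈ B <;> by_cases hy : y ∈ B <;> simp [hx, hy] <;> norm_num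

lemma sum_univ_dg (G : SimpleGraph V) [DecidableRel G.Adj] :
    ∑ v, dg G v = 2 * (G.edgeFinset.card : ℚ) := by
  have h := sum_mul_dg G (fun _ => 1)
  simp only [one_mul] at h
  rw [h, Finset.card_eq_sum_ones]
  push_cast
  rw [Finset.mul_sum]
  refine Finset.sum_congr rfl fun e he => ?_
  induction e with
  | _ x y =>
    have hxy : x ≠ y := by
      have : G.Adj x y := by simpa using he
      exact this.ne
    rw [endSum_mk _ hxy]
    norm_num

/-- Difference of `r` along `e`, oriented towards `t`. -/
noncomputable def dif (G : SimpleGraph V) (t : V) (r : V → ℚ) (e : Sym2 V) : ℚ :=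
  Sym2.lift ⟨fun x y =>
    ((Int.sign ((G.dist x t : ℤ) - G.dist y t) : ℤ) : ℚ) * (r x - r y), fun x y => by
      have : (G.dist x t : ℤ) - G.dist y t = -((G.dist y t : ℤ) - G.dist x t) := by ring
      dsimp only
      rw [this, Int.sign_neg]; push_cast; ring⟩ e

lemma dif_mk (G : SimpleGraph V) (t : V) (r : V → ℚ) (x y : V) : dif G t r s(x, y) =
    ((Int.sign ((G.dist x t : ℤ) - G.dist y t) : ℤ) : ℚ) * (r x - r y) := rfl

lemma sum_dif (G : SimpleGraph V) (hG : G.Connected) (t : V) (r : V → ℚ) {v : V}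
    (q : G.Walk v t) (hq : q.length = G.dist v t) :
    (q.edges.map (dif G t r)).sum = r v - r t := by
  induction q with
  | nil => simp
  | @cons v u t h q ih =>
    have h1 : G.dist v t ≤ G.dist v u + G.dist u t := hG.dist_triangle
    have h2 : G.dist u t ≤ q.length := SimpleGraph.dist_le q
    have h3 : G.dist v u = 1 := SimpleGraph.dist_eq_one_iff_adj.2 h
    simp only [SimpleGraph.Walk.length_cons] at hq
    have h4 : q.length = G.dist u t := by omega
    have h5 : (G.dist v t : ℤ) - G.dist u t = 1 := by omega
    simp only [SimpleGraph.Walk.edges_cons, List.map_cons, List.sum_cons]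
    rw [ih h4, dif_mk, h5]
    simp

/-- if the conditions `(⋆⋆)_{A_e}`, i.e.
`(δ_{A_e} − 1)/2 < Δ_w(O_{A_e}) < (δ_{A_e} + 1)/2`, hold for every edge `e` with
`A_e ≠ ∅`, then `w` is numerically good: every depth-one datum has nonnegative defect,
with defect zero iff the datum is locally free. -/
theorem stmt_11 (G : SimpleGraph V) [DecidableRel G.Adj]
    (hG : G.Connected) (hγ : 2 ≤ Fintype.card V)
    (g : V → ℕ) (w : V → ℚ) (hw : ∀ v, 0 < w v ∧ w v < 1) (hwsum : ∑ v, w v = 1)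
    (pa : ℚ)
    (hpa : pa = (∑ v, (g v : ℚ)) + (G.edgeFinset.card : ℚ) - (Fintype.card V : ℚ) + 1)
    (lam : V → ℚ) (hlam : ∀ v, lam v = 1 - (g v : ℚ) - w v * (1 - pa))
    (t : V) (p : ∀ v : V, G.Walk v t)
    (hmin : ∀ v, (p v).length = G.dist v t)
    (hres : ∀ (v u : V) (h : u ∈ (p v).support), (p v).dropUntil u h = p u)
    (A : Sym2 V → Finset V) (hA : ∀ e v, v ∈ A e ↔ e ∈ (p v).edges)
    (hstar : ∀ e ∈ G.edgeFinset, (A e).Nonempty →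
      ((crossCount G (A e) : ℚ) - 1) / 2 < DeltaO G lam (A e)
      ∧ DeltaO G lam (A e) < ((crossCount G (A e) : ℚ) + 1) / 2) :
    ∀ D : DepthOneDatum G,
      0 ≤ D.defect lam ∧ (D.defect lam = 0 ↔ D.LocFree) := by
  intro D
  set r : V → ℚ := fun v => (D.r v : ℚ) with hr
  set m : V → ℚ := fun v => lam v - dg G v / 2 with hm
  set T : Sym2 V → ℚ := fun e => endSum (fun v => (D.a v e : ℚ)) e with hT
  -- basic facts on edges
  have hTnn : ∀ e, 0 ≤ T e := fun e =>
    Finset.sum_nonneg fun v _ => by split_ifs <;> positivity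
  have hT0 : ∀ e, T e = 0 ↔ ∀ v ∈ e, D.a v e = 0 := by
    intro e
    simp only [hT, endSum]
    rw [Finset.sum_eq_zero_iff_of_nonneg (fun v _ => by split_ifs <;> positivity)]
    simp
  have hRS : ∀ e ∈ G.edgeFinset, endSum r e = 2 * (D.s e : ℚ) + T e := by
    intro e he
    induction e with
    | _ x y =>
      have hadj : G.Adj x y := by simpa using he
      have h1 := D.compat s(x, y) hadj x (by simp)
      have h2 := D.compat s(x, y) hadj y (by simp)
      simp only [hT]
      rw [endSum_mk _ hadj.ne, endSum_mk _ hadj.ne]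
      simp only [hr]
      rw [h1, h2]; push_cast; ring
  have hdT : ∀ e ∈ G.edgeFinset, |dif G t r e| ≤ T e := by
    intro e he
    induction e with
    | _ x y =>
      have hadj : G.Adj x y := by simpa using he
      have h1 := D.compat s(x, y) hadj x (by simp)
      have h2 := D.compat s(x, y) hadj y (by simp)
      simp only [hT]
      rw [endSum_mk _ hadj.ne, dif_mk, abs_mul]
      have h3 : |((Int.sign ((G.dist x t : ℤ) - G.dist y t) : ℤ) : ℚ)| ≤ 1 := by
        rcases Int.sign_trichotomy ((G.dist x t : ℤ) - G.dist y t) with h | h | h <;>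
          rw [h] <;> norm_num
      have ha : (0 : ℚ) ≤ D.a x s(x, y) := by positivity
      have hb : (0 : ℚ) ≤ D.a y s(x, y) := by positivity
      have h4 : |r x - r y| ≤ (D.a x s(x, y) : ℚ) + D.a y s(x, y) := by
        simp only [hr]
        rw [h1, h2]; push_cast
        rw [abs_le]; constructor <;> linarith
      calc _ ≤ 1 * |r x - r y| := mul_le_mul_of_nonneg_right h3 (abs_nonneg _)
        _ ≤ _ := by linarith
  -- the total mass of `m` vanishes
  have hm0 : ∑ v, m v = 0 := by
    simp only [hm]
    rw [Finset.sum_sub_distrib, ← Finset.sum_div, sum_univ_dg]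
    simp only [hlam]
    rw [Finset.sum_sub_distrib, Finset.sum_sub_distrib, ← Finset.sum_mul, hwsum, hpa]
    simp
  have hmA : ∀ e ∈ G.edgeFinset, |∑ v ∈ A e, m v| < 1 / 2 := by
    intro e he
    rcases (A e).eq_empty_or_nonempty with h | h
    · rw [h]; simp
    · obtain ⟨h1, h2⟩ := hstar e he h
      unfold DeltaO at h1 h2
      simp only [hm]
      rw [Finset.sum_sub_distrib, ← Finset.sum_div, sum_dg, abs_lt]
      constructor <;> linarith
  -- telescoping along the minimal paths
  have htel : ∀ v, r v - r t = ∑ e ∈ G.edgeFinset, if v ∈ A e then dif G t r e else 0 := by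
    intro v
    rw [← sum_dif G hG t r (p v) (hmin v)]
    have hp : (p v).IsPath := SimpleGraph.Walk.isPath_of_length_eq_dist _ (hmin v)
    rw [← List.sum_toFinset _ hp.isTrail.edges_nodup, ← Finset.sum_filter]
    refine Finset.sum_congr ?_ fun _ _ => rfl
    ext e
    simp only [List.mem_toFinset, Finset.mem_filter, hA, SimpleGraph.mem_edgeFinset]
    exact ⟨fun h => ⟨(p v).edges_subset_edgeSet h, h⟩, fun h => h.2⟩
  have hsum : ∑ v, r v * m v = ∑ e ∈ G.edgeFinset, dif G t r e * ∑ v ∈ A e, m v := by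
    have h1 : ∑ v, r v * m v = ∑ v, (r v - r t) * m v := by
      simp only [sub_mul]
      rw [Finset.sum_sub_distrib, ← Finset.mul_sum, hm0]; ring
    rw [h1]
    simp only [htel, Finset.sum_mul]
    rw [Finset.sum_comm]
    refine Finset.sum_congr rfl fun e _ => ?_
    rw [Finset.mul_sum]
    simp only [ite_mul, zero_mul, Finset.sum_ite_mem, Finset.univ_inter]
  have hdef : D.defect lam =
      ∑ e ∈ G.edgeFinset, (dif G t r e * (∑ v ∈ A e, m v) + T e / 2) := by
    rw [Finset.sum_add_distrib, ← hsum]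
    have h1 := sum_mul_dg G r
    rw [Finset.sum_congr rfl hRS, Finset.sum_add_distrib, ← Finset.mul_sum] at h1
    have h2 : ∑ v, r v * m v = ∑ v, r v * lam v - (∑ v, r v * dg G v) / 2 := by
      rw [Finset.sum_div, ← Finset.sum_sub_distrib]
      refine Finset.sum_congr rfl fun v _ => ?_
      simp only [hm]; ring
    rw [h2, h1, ← Finset.sum_div]
    unfold DepthOneDatum.defect
    simp only [hr]
    ring
  have hterm : ∀ e ∈ G.edgeFinset,
      T e * (1 / 2 - |∑ v ∈ A e, m v|) ≤ dif G t r e * (∑ v ∈ A e, m v) + T e / 2 := by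
    intro e he
    have h1 := neg_abs_le (dif G t r e * (∑ v ∈ A e, m v))
    rw [abs_mul] at h1
    have h2 := mul_le_mul_of_nonneg_right (hdT e he) (abs_nonneg (∑ v ∈ A e, m v))
    linarith
  have hnn : ∀ e ∈ G.edgeFinset, 0 ≤ dif G t r e * (∑ v ∈ A e, m v) + T e / 2 := by
    intro e he
    have h1 := hmA e he
    have h2 := mul_nonneg (hTnn e) (by linarith : 0 ≤ 1 / 2 - |∑ v ∈ A e, m v|)
    exact h2.trans (hterm e he)
  rw [hdef]
  refine ⟨Finset.sum_nonneg hnn, ?_⟩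
  rw [Finset.sum_eq_zero_iff_of_nonneg hnn]
  constructor
  · intro h e he
    have he' : e ∈ G.edgeFinset := by simpa using he
    rw [← hT0]
    have h1 := hmA e he'
    have h2 := hterm e he'
    rw [h e he'] at h2
    have h3 : 0 < 1 / 2 - |∑ v ∈ A e, m v| := by linarith
    exact le_antisymm (nonpos_of_mul_nonpos_left h2 h3) (hTnn e)
  · intro h e he
    have he' : e ∈ G.edgeSet := by simpa using he
    have h1 : T e = 0 := (hT0 e).2 (h e he')
    have h2 := hdT e he
    rw [h1] at h2
    have h3 : dif G t r e = 0 := abs_nonpos_iff.1 h2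
    rw [h1, h3]; simp
end

section
/- Let T be a finite tree (connected acyclic simple graph) with vertex set V of size γ ≥ 2 (so with δ = γ − 1 edges), g : V → ℕ, w : V → ℚ with 0 < w(v) < 1 and ∑ w(v) = 1; set p_a = (∑ g(v)) + δ − γ + 1, λ(v) = 1 − g(v) − w(v)·(1 − p_a), and Δ_w(O_B) = (∑_{v∈B} λ(v)) − N(B) for B ⊆ V. Fix a root vertex t; for each edge e let A_e be the vertex set of the connected component of T minus e not containing t, with endpoints u_e ∈ A_e and v_e ∉ A_e. Then δ_{A_e} = 1 for every edge e, and for every depth-one datum (r,s,a,b) on T whose orientation at each edge e attaches a(e) to u_e and b(e) to v_e, one has (∑_{v∈V} r(v)·λ(v)) − ∑_e s(e) = ∑_e [ a(e)·Δ_w(O_{A_e}) + b(e)·(1 − Δ_w(O_{A_e})) ]. -/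
open Finset

variable {V : Type*} [Fintype V] [DecidableEq V]

/-- on a tree `T` with root `t`, where `A_e` is the vertex set of the
connected component of `T` minus the edge `e` not containing `t` (with endpoints
`u_e ∈ A_e`, `v_e ∉ A_e`), one has `δ_{A_e} = 1` for every edge, and every depth-one
datum has defect `∑_e (a(e)·Δ_w(O_{A_e}) + b(e)·(1 − Δ_w(O_{A_e})))`. -/
theorem stmt_12 (T : SimpleGraph V) [DecidableRel T.Adj]
    (hT : T.IsTree) (hγ : 2 ≤ Fintype.card V)
    (g : V → ℕ) (w : V → ℚ) (hw : ∀ v, 0 < w v ∧ w v < 1) (hwsum : ∑ v, w v = 1)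
    (pa : ℚ)
    (hpa : pa = (∑ v, (g v : ℚ)) + (T.edgeFinset.card : ℚ) - (Fintype.card V : ℚ) + 1)
    (lam : V → ℚ) (hlam : ∀ v, lam v = 1 - (g v : ℚ) - w v * (1 - pa))
    (t : V) (A : Sym2 V → Finset V)
    (hA : ∀ e ∈ T.edgeFinset, ∀ v : V,
      v ∈ A e ↔ ¬ (T.deleteEdges {e}).Reachable v t)
    (uE vE : Sym2 V → V)
    (hends : ∀ e ∈ T.edgeFinset, e = s(uE e, vE e) ∧ uE e ∈ A e ∧ vE e ∉ A e) :
    (∀ e ∈ T.edgeFinset, crossCount T (A e) = 1)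
    ∧ ∀ D : DepthOneDatum T,
        D.defect lam
          = ∑ e ∈ T.edgeFinset,
              ((D.a (uE e) e : ℚ) * DeltaO T lam (A e)
                + (D.a (vE e) e : ℚ) * (1 - DeltaO T lam (A e))) := by
  have hedge : ∀ f ∈ T.edgeFinset, ∀ x y, T.Adj x y → s(x, y) ≠ f → (x ∈ A f ↔ y ∈ A f) := by
    intro f hf x y hxy hne
    have hadj : (T.deleteEdges {f}).Adj x y := by
      rw [SimpleGraph.deleteEdges_adj]
      exact ⟨hxy, by simpa using hne⟩
    rw [hA f hf, hA f hf, not_iff_not]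
    exact ⟨fun h => hadj.symm.reachable.trans h, fun h => hadj.reachable.trans h⟩
  have hadjE : ∀ e ∈ T.edgeFinset, T.Adj (uE e) (vE e) := by
    intro e he
    have h := he
    rw [(hends e he).1, SimpleGraph.mem_edgeFinset, SimpleGraph.mem_edgeSet] at h
    exact h
  have htA : ∀ f ∈ T.edgeFinset, t ∉ A f := by
    intro f hf h
    exact (hA f hf t).1 h (SimpleGraph.Reachable.refl t)
  have hsymmem : ∀ e ∈ T.edgeFinset, ∀ B : Finset V,
      e ∈ B.sym2 ↔ (uE e ∈ B ∧ vE e ∈ B) := by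
    intro e he B
    conv_lhs => rw [(hends e he).1]
    exact Finset.mk_mem_sym2_iff
  have hiff : ∀ e ∈ T.edgeFinset, ∀ f ∈ T.edgeFinset, e ≠ f → (uE e ∈ A f ↔ vE e ∈ A f) := by
    intro e he f hf hne
    exact hedge f hf _ _ (hadjE e he) (by rw [← (hends e he).1]; exact hne)
  have hin : ∀ e ∈ T.edgeFinset, ∀ f ∈ T.edgeFinset, (e ∈ (A f).sym2 ↔ vE e ∈ A f) := by
    intro e he f hf
    rw [hsymmem e he]
    refine ⟨fun h => h.2, fun h => ⟨?_, h⟩⟩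
    by_cases hne : e = f
    · subst hne
      exact (hends e he).2.1
    · exact (hiff e he f hf hne).2 h
  refine ⟨?_, ?_⟩
  · intro f hf
    unfold crossCount
    rw [Finset.card_eq_one]
    refine ⟨f, ?_⟩
    ext e
    rw [Finset.mem_filter, Finset.mem_singleton]
    constructor
    · rintro ⟨he, h1, h2⟩
      by_contra hne
      rw [hsymmem e he] at h1 h2
      have := hiff e he f hf hne
      simp only [Finset.mem_compl] at h2
      tauto
    · rintro rfl
      have := hends e hf
      refine ⟨hf, ?_, ?_⟩
      · rw [hsymmem e hf]; tauto
      · rw [hsymmem e hf]; simp only [Finset.mem_compl]; tauto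
  · intro D
    set d : Sym2 V → ℚ := fun e => (D.r (uE e) : ℚ) - D.r (vE e) with hd
    have hstep : ∀ e ∈ T.edgeFinset,
        (∑ f ∈ T.edgeFinset, if uE e ∈ A f then d f else 0)
          - (∑ f ∈ T.edgeFinset, if vE e ∈ A f then d f else 0) = d e := by
      intro e he
      rw [← Finset.sum_sub_distrib, Finset.sum_eq_single_of_mem e he]
      · rw [if_pos (hends e he).2.1, if_neg (hends e he).2.2, sub_zero]
      · intro f hf hne
        have := hiff e he f hf hne.symm
        simp only [this, sub_self]
    let φ : V → ℚ := fun v => (D.r v : ℚ) - ∑ f ∈ T.edgeFinset, if v ∈ A f then d f else 0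
    have hφE : ∀ e ∈ T.edgeFinset, φ (uE e) = φ (vE e) := by
      intro e he
      have := hstep e he
      simp only [φ]
      simp only [hd] at this ⊢
      linarith
    have hφadj : ∀ x y, T.Adj x y → φ x = φ y := by
      intro x y hxy
      have he : s(x, y) ∈ T.edgeFinset := by simpa using hxy
      have h1 := (hends _ he).1
      have h2 := hφE _ he
      rcases Sym2.eq_iff.1 h1 with ⟨h3, h4⟩ | ⟨h3, h4⟩
      · rw [← h3, ← h4] at h2; exact h2
      · rw [← h3, ← h4] at h2; exact h2.symm
    have hφ : ∀ v, φ v = φ t := by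
      intro v
      obtain ⟨p⟩ := hT.connected.preconnected v t
      have hwalk : ∀ (x y : V), T.Walk x y → φ x = φ y := by
        intro x y q
        induction q with
        | nil => rfl
        | cons h _ ih => exact (hφadj _ _ h).trans ih
      exact hwalk v t p
    have hφt : φ t = D.r t := by
      have : (∑ f ∈ T.edgeFinset, if t ∈ A f then d f else 0) = 0 :=
        Finset.sum_eq_zero (fun f hf => if_neg (htA f hf))
      simp only [φ, this, sub_zero]
    have hr : ∀ v, (D.r v : ℚ) = D.r t + ∑ f ∈ T.edgeFinset, if v ∈ A f then d f else 0 := by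
      intro v
      have := hφ v
      rw [hφt] at this
      simp only [φ] at this
      linarith
    have hlamsum : ∑ v, lam v = (T.edgeFinset.card : ℚ) := by
      simp only [hlam, Finset.sum_sub_distrib, ← Finset.sum_mul, hwsum, hpa, Finset.sum_const,
        Finset.card_univ, nsmul_eq_mul]
      ring
    have hL : ∑ v, (D.r v : ℚ) * lam v
        = D.r t * T.edgeFinset.card + ∑ f ∈ T.edgeFinset, d f * ∑ v ∈ A f, lam v := by
      rw [← hlamsum, Finset.mul_sum]
      have : ∀ v, (D.r v : ℚ) * lam v = D.r t * lam v
          + ∑ f ∈ T.edgeFinset, if v ∈ A f then d f * lam v else 0 := by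
        intro v
        rw [hr v, add_mul, Finset.sum_mul]
        simp only [ite_mul, zero_mul]
      rw [Finset.sum_congr rfl (fun v _ => this v), Finset.sum_add_distrib, Finset.sum_comm]
      congr 1
      refine Finset.sum_congr rfl (fun f _ => ?_)
      rw [Finset.mul_sum, Finset.sum_ite_mem, Finset.univ_inter]
    have hR : ∑ e ∈ T.edgeFinset, (D.r (vE e) : ℚ)
        = D.r t * T.edgeFinset.card + ∑ f ∈ T.edgeFinset, d f * (insideCount T (A f) : ℚ) := by
      rw [Finset.sum_congr rfl (fun e _ => hr (vE e)), Finset.sum_add_distrib, Finset.sum_comm,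
        Finset.sum_const, nsmul_eq_mul, mul_comm]
      congr 1
      refine Finset.sum_congr rfl (fun f hf => ?_)
      unfold insideCount
      rw [Finset.filter_congr (fun e he => hin e he f hf), ← Finset.sum_filter, Finset.sum_const,
        nsmul_eq_mul, mul_comm]
    have hterm : ∀ e ∈ T.edgeFinset,
        ((D.a (uE e) e : ℚ) * DeltaO T lam (A e) + (D.a (vE e) e : ℚ) * (1 - DeltaO T lam (A e)))
        = d e * (∑ v ∈ A e, lam v) - d e * (insideCount T (A e) : ℚ) + D.r (vE e) - D.s e := by
      intro e he
      have he' : e ∈ T.edgeSet := by simpa using he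
      have hu : uE e ∈ e := by
        have h := Sym2.mem_mk_left (uE e) (vE e)
        rwa [← (hends e he).1] at h
      have hv : vE e ∈ e := by
        have h := Sym2.mem_mk_right (uE e) (vE e)
        rwa [← (hends e he).1] at h
      have h1 : (D.r (uE e) : ℚ) = D.s e + D.a (uE e) e := by
        exact_mod_cast D.compat e he' _ hu
      have h2 : (D.r (vE e) : ℚ) = D.s e + D.a (vE e) e := by
        exact_mod_cast D.compat e he' _ hv
      simp only [hd, DeltaO]
      rw [h1, h2]
      ring
    unfold DepthOneDatum.defect
    rw [Finset.sum_congr rfl hterm, Finset.sum_sub_distrib, Finset.sum_add_distrib,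
      Finset.sum_sub_distrib, hL, hR]
    ring
end

section
/- Let T be a finite tree (connected acyclic simple graph) with vertex set V of size γ ≥ 2 and δ = γ − 1 edges, g : V → ℕ, and w : V → ℚ with 0 < w(v) < 1 and ∑ w(v) = 1; set p_a = (∑ g(v)) + δ − γ + 1, λ(v) = 1 − g(v) − w(v)·(1 − p_a), and Δ_w(O_B) = (∑_{v∈B} λ(v)) − N(B) for B ⊆ V. Then the following are equivalent: (i) for every nonempty proper subset B ⊆ V whose induced subgraph is connected, 0 < Δ_w(O_B) < δ_B; (ii) every depth-one datum (r,s,a,b) on T has defect Δ = (∑_{v∈V} r(v)·λ(v)) − ∑_e s(e) ≥ 0, with Δ = 0 if and only if a(e) = b(e) = 0 for every edge e. -/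
open Finset

variable {V : Type*} [Fintype V] [DecidableEq V]

namespace Stmt13

open SimpleGraph

/-- the side of the edge `e` containing its endpoint `v`. -/
noncomputable def side (T : SimpleGraph V) (v : V) (e : Sym2 V) : Finset V :=
  open Classical in univ.filter (fun w => ∀ z ∈ e, T.dist w v ≤ T.dist w z)

lemma mem_side (T : SimpleGraph V) (hT : T.IsTree) {v u : V} (h : T.Adj v u) (w : V) :
    w ∈ side T v s(v, u) ↔ T.dist w v < T.dist w u := by
  have h1 := hT.dist_ne_of_adj w h
  simp only [side, mem_filter, mem_univ, true_and, Sym2.mem_iff, forall_eq_or_imp, forall_eq]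
  omega

lemma exists_closer (T : SimpleGraph V) (hT : T.IsTree) {w v : V} (h : w ≠ v) :
    ∃ u, T.Adj w u ∧ T.dist u v + 1 = T.dist w v := by
  obtain ⟨p, hp⟩ := hT.connected.exists_walk_length_eq_dist w v
  cases p with
  | nil => exact absurd rfl h
  | cons hadj q =>
    rename_i u
    refine ⟨u, hadj, ?_⟩
    have h1 := dist_le q
    rw [Walk.length_cons] at hp
    have h2 := hT.dist_eq_dist_add_one_of_adj v hadj
    rw [dist_comm (u := v), dist_comm (u := v)] at h2
    omega

lemma closer_unique (T : SimpleGraph V) (hT : T.IsTree) {w v u u' : V}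
    (h : T.Adj v u) (h' : T.Adj v u') (hd : T.dist w u < T.dist w v)
    (hd' : T.dist w u' < T.dist w v) : u = u' := by
  have key : ∀ {x}, T.Adj v x → T.dist w x < T.dist w v →
      ∃ p : T.Walk v w, p.IsPath ∧ p.snd = x := by
    intro x hx hdx
    obtain ⟨p, hp⟩ := hT.connected.exists_walk_length_eq_dist x w
    refine ⟨Walk.cons hx p, ?_, by simp⟩
    apply Walk.isPath_of_length_eq_dist
    have h2 := hT.dist_eq_dist_add_one_of_adj w hx
    rw [Walk.length_cons, hp, dist_comm, dist_comm (u := v)]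
    omega
  obtain ⟨p, hp, rfl⟩ := key h hd
  obtain ⟨q, hq, rfl⟩ := key h' hd'
  rw [(hT.existsUnique_path v w).unique hp hq]

lemma side_connected (T : SimpleGraph V) (hT : T.IsTree) {v u : V} (h : T.Adj v u) :
    (T.induce (side T v s(v, u) : Set V)).Connected := by
  have hv : v ∈ side T v s(v, u) := by
    rw [mem_side T hT h, dist_self]
    exact hT.connected.pos_dist_of_ne h.ne
  have key : ∀ n w, T.dist w v = n → ∀ hw : w ∈ side T v s(v, u),
      (T.induce (side T v s(v, u) : Set V)).Reachable ⟨w, hw⟩ ⟨v, hv⟩ := by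
    intro n
    induction n with
    | zero =>
      intro w hd hw
      have : w = v := hT.connected.dist_eq_zero_iff.1 hd
      subst this
      exact Reachable.refl _
    | succ n ih =>
      intro w hd hw
      have hne : w ≠ v := by
        rintro rfl
        simp at hd
      obtain ⟨x, hx, hxd⟩ := exists_closer T hT hne
      have hxs : x ∈ side T v s(v, u) := by
        rw [mem_side T hT h] at hw ⊢
        have h3 := hT.connected.dist_triangle (u := w) (v := x) (w := u)
        rw [dist_eq_one_iff_adj.2 hx] at h3
        omega
      refine Reachable.trans (Adj.reachable ?_) (ih x (by omega) hxs)
      simpa using hx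
  have : Nonempty (side T v s(v, u) : Set V) := ⟨⟨v, hv⟩⟩
  refine Connected.mk ?_
  rintro ⟨a, ha⟩ ⟨b, hb⟩
  exact (key _ a rfl ha).trans (key _ b rfl hb).symm

lemma insideCount_connected (T : SimpleGraph V) [DecidableRel T.Adj] (hT : T.IsTree)
    (B : Finset V) (hB : (T.induce (B : Set V)).Connected) :
    insideCount T B + 1 = B.card := by
  classical
  have h1 : (T.induce (B : Set V)).IsTree := ⟨hB, hT.isAcyclic.induce _⟩
  have h2 := h1.card_edgeFinset
  have h3 := congrArg Finset.card (map_edgeFinset_induce (s := (B : Set V)) (G := T))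
  rw [card_map, toFinset_coe] at h3
  have h4 : insideCount T B = #(T.edgeFinset ∩ B.sym2) := by
    unfold insideCount
    rw [filter_mem_eq_inter]
  have h5 : Fintype.card (B : Set V) = #B := by simp
  rw [h4, ← h3, ← h5, ← h2]
  congr!

lemma delta_side (T : SimpleGraph V) [DecidableRel T.Adj] (hT : T.IsTree) (lam : V → ℚ)
    {v u : V} (h : T.Adj v u) :
    DeltaO T lam (side T v s(v, u)) = ∑ w ∈ side T v s(v, u), (lam w - 1) + 1 := by
  have h1 := insideCount_connected T hT _ (side_connected T hT h)
  have h2 : ((side T v s(v, u)).card : ℚ) = insideCount T (side T v s(v, u)) + 1 := by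
    exact_mod_cast h1.symm
  unfold DeltaO
  rw [sum_sub_distrib, sum_const, nsmul_eq_mul, h2]
  ring

lemma side_compl (T : SimpleGraph V) (hT : T.IsTree) {v u : V} (h : T.Adj v u) :
    side T u s(v, u) = (side T v s(v, u))ᶜ := by
  ext w
  have h1 := hT.dist_ne_of_adj w h
  rw [mem_compl, mem_side T hT h, Sym2.eq_swap, mem_side T hT h.symm]
  omega

lemma delta_add (T : SimpleGraph V) [DecidableRel T.Adj] (hT : T.IsTree) (lam : V → ℚ)
    (hs : ∑ w, (lam w - 1) = -1) {v u : V} (h : T.Adj v u) :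
    DeltaO T lam (side T v s(v, u)) + DeltaO T lam (side T u s(v, u)) = 1 := by
  have h2 := delta_side T hT lam h.symm
  rw [Sym2.eq_swap] at h2
  rw [delta_side T hT lam h, h2, side_compl T hT h]
  have := sum_add_sum_compl (side T v s(v, u)) (fun w => lam w - 1)
  linarith

lemma lam_eq (T : SimpleGraph V) [DecidableRel T.Adj] (hT : T.IsTree) (lam : V → ℚ)
    (hs : ∑ w, (lam w - 1) = -1) (v : V) :
    lam v = ∑ u ∈ T.neighborFinset v, DeltaO T lam (side T v s(v, u)) := by
  have h1 : ∀ u ∈ T.neighborFinset v, DeltaO T lam (side T v s(v, u))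
      = - ∑ w ∈ side T u s(v, u), (lam w - 1) := by
    intro u hu
    rw [mem_neighborFinset] at hu
    have h2 := delta_side T hT lam hu.symm
    rw [Sym2.eq_swap] at h2
    have := delta_add T hT lam hs hu
    linarith
  rw [sum_congr rfl h1, sum_neg_distrib, ← sum_biUnion]
  · have : (T.neighborFinset v).biUnion (fun u => side T u s(v, u)) = univ.erase v := by
      ext w
      simp only [mem_biUnion, mem_neighborFinset, mem_erase, mem_univ, and_true]
      constructor
      · rintro ⟨u, hu, hw⟩ rfl
        rw [Sym2.eq_swap, mem_side T hT hu.symm] at hw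
        simp at hw
      · intro hw
        obtain ⟨u, hu, hd⟩ := exists_closer T hT (Ne.symm hw)
        refine ⟨u, hu, ?_⟩
        rw [Sym2.eq_swap, mem_side T hT hu.symm, dist_comm, dist_comm (v := v)]
        omega
    rw [this]
    have := add_sum_erase univ (fun w => lam w - 1) (mem_univ v)
    linarith
  · intro u hu u' hu' hne
    rw [mem_coe, mem_neighborFinset] at hu hu'
    rw [Function.onFun, Finset.disjoint_left]
    intro w hw hw'
    rw [Sym2.eq_swap, mem_side T hT hu.symm] at hw
    rw [Sym2.eq_swap, mem_side T hT hu'.symm] at hw'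
    exact hne (closer_unique T hT hu hu' hw hw')

lemma sum_swap (T : SimpleGraph V) [DecidableRel T.Adj] (F : V → Sym2 V → ℚ) :
    ∑ v, ∑ u ∈ T.neighborFinset v, F v s(v, u)
      = ∑ e ∈ T.edgeFinset, ∑ v ∈ univ.filter (· ∈ e), F v e := by
  have : ∀ v, ∑ u ∈ T.neighborFinset v, F v s(v, u)
      = ∑ e ∈ T.edgeFinset.filter (v ∈ ·), F v e := by
    intro v
    refine sum_bij (fun u _ => s(v, u)) ?_ ?_ ?_ ?_
    · intro u hu
      simpa using hu
    · intro a _ b _ hab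
      exact Sym2.congr_right.1 hab
    · intro e he
      rw [mem_filter] at he
      obtain ⟨u, rfl⟩ := he.2
      exact ⟨u, by simpa using he.1, rfl⟩
    · intros
      rfl
  simp_rw [this, sum_filter]
  exact sum_comm

lemma filter_pair {u v : V} : univ.filter (· ∈ s(u, v)) = ({u, v} : Finset V) := by
  ext
  simp

lemma defect_eq (T : SimpleGraph V) [DecidableRel T.Adj] (hT : T.IsTree) (lam : V → ℚ)
    (hs : ∑ w, (lam w - 1) = -1) (D : DepthOneDatum T) :
    D.defect lam = ∑ e ∈ T.edgeFinset, ∑ v ∈ univ.filter (· ∈ e),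
      (D.a v e : ℚ) * DeltaO T lam (side T v e) := by
  have h1 : ∑ v, (D.r v : ℚ) * lam v = ∑ e ∈ T.edgeFinset, ∑ v ∈ univ.filter (· ∈ e),
      (D.r v : ℚ) * DeltaO T lam (side T v e) := by
    rw [← sum_swap T (fun v e => (D.r v : ℚ) * DeltaO T lam (side T v e))]
    refine sum_congr rfl fun v _ => ?_
    rw [← mul_sum, ← lam_eq T hT lam hs]
  unfold DepthOneDatum.defect
  rw [h1, ← sum_sub_distrib]
  refine sum_congr rfl fun e he => ?_
  rw [mem_edgeFinset] at he
  induction e using Sym2.ind with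
  | _ u v =>
    have hadj : T.Adj u v := he
    have h2 := delta_add T hT lam hs hadj
    have hu := D.compat _ he u (by simp)
    have hv := D.compat _ he v (by simp)
    rw [filter_pair, sum_pair hadj.ne, sum_pair hadj.ne, hu, hv]
    push_cast
    linear_combination (D.s s(u, v) : ℚ) * h2

/-- structure sheaf of `B` as a depth-one datum. -/
def indDatum (T : SimpleGraph V) (B : Finset V) : DepthOneDatum T where
  r v := if v ∈ B then 1 else 0
  s e := if e ∈ B.sym2 then 1 else 0
  a v e := (if v ∈ B then 1 else 0) - (if e ∈ B.sym2 then 1 else 0)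
  compat := by
    intro e _ v hv
    by_cases h : e ∈ B.sym2
    · have := Finset.mem_sym2_iff.1 h v hv
      simp [h, this]
    · simp [h]

lemma indDatum_defect (T : SimpleGraph V) [DecidableRel T.Adj] (lam : V → ℚ) (B : Finset V) :
    (indDatum T B).defect lam = DeltaO T lam B := by
  simp [DepthOneDatum.defect, indDatum, DeltaO, insideCount]

lemma exists_cross (T : SimpleGraph V) (hT : T.IsTree) (B : Finset V) (h1 : B.Nonempty)
    (h2 : B ≠ univ) : ∃ u v, T.Adj u v ∧ u ∈ B ∧ v ∉ B := by
  obtain ⟨x, hx⟩ := h1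
  obtain ⟨y, hy⟩ : ∃ y, y ∉ B := by
    by_contra hc
    push Not at hc
    exact h2 (eq_univ_iff_forall.2 hc)
  obtain ⟨p⟩ := hT.connected.preconnected x y
  obtain ⟨d, _, hd, hd'⟩ := p.exists_boundary_dart (B : Set V) hx hy
  exact ⟨d.fst, d.snd, d.adj, hd, hd'⟩

lemma delta_pos (T : SimpleGraph V) [DecidableRel T.Adj] (hT : T.IsTree) (lam : V → ℚ)
    (H : ∀ D : DepthOneDatum T, 0 ≤ D.defect lam ∧ (D.defect lam = 0 ↔ D.LocFree))
    (B : Finset V) (h1 : B.Nonempty) (h2 : B ≠ univ) : 0 < DeltaO T lam B := by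
  have h3 := H (indDatum T B)
  rw [indDatum_defect] at h3
  refine lt_of_le_of_ne h3.1 fun h0 => ?_
  have h4 := h3.2.1 h0.symm
  obtain ⟨u, v, huv, hu, hv⟩ := exists_cross T hT B h1 h2
  have h5 := h4 s(u, v) huv u (by simp)
  simp [indDatum, hu, hv] at h5

lemma delta_compl (T : SimpleGraph V) [DecidableRel T.Adj] (lam : V → ℚ)
    (hs : ∑ w, lam w = T.edgeFinset.card) (B : Finset V) :
    DeltaO T lam B + DeltaO T lam Bᶜ = crossCount T B := by
  have h1 : (T.edgeFinset.card : ℚ) = insideCount T B + insideCount T Bᶜ + crossCount T B := by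
    unfold insideCount crossCount
    simp only [card_filter]
    rw [card_eq_sum_ones]
    push_cast
    rw [← sum_add_distrib, ← sum_add_distrib]
    refine sum_congr rfl fun e _ => ?_
    induction e using Sym2.ind with
    | _ u v =>
      by_cases hu : u ∈ B <;> by_cases hv : v ∈ B <;> simp [hu, hv]
  have h2 := sum_add_sum_compl B lam
  unfold DeltaO
  linarith

end Stmt13

/-- on a tree `T`, the stability condition `0 < Δ_w(O_B) < δ_B` for all
nonempty proper connected `B` is equivalent to `w` being numerically good (every
depth-one datum has nonnegative defect, zero iff locally free). -/
theorem stmt_13 (T : SimpleGraph V) [DecidableRel T.Adj]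
    (hT : T.IsTree) (hγ : 2 ≤ Fintype.card V)
    (g : V → ℕ) (w : V → ℚ) (hw : ∀ v, 0 < w v ∧ w v < 1) (hwsum : ∑ v, w v = 1)
    (pa : ℚ)
    (hpa : pa = (∑ v, (g v : ℚ)) + (T.edgeFinset.card : ℚ) - (Fintype.card V : ℚ) + 1)
    (lam : V → ℚ) (hlam : ∀ v, lam v = 1 - (g v : ℚ) - w v * (1 - pa)) :
    (∀ B : Finset V, B.Nonempty → B ≠ Finset.univ →
        (T.induce (B : Set V)).Connected →
        0 < DeltaO T lam B ∧ DeltaO T lam B < (crossCount T B : ℚ))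
    ↔ (∀ D : DepthOneDatum T,
        0 ≤ D.defect lam ∧ (D.defect lam = 0 ↔ D.LocFree)) := by
  have hcard := hT.card_edgeFinset
  have hcardQ : (T.edgeFinset.card : ℚ) + 1 = Fintype.card V := by exact_mod_cast hcard
  have hsum : ∑ v, lam v = T.edgeFinset.card := by
    simp_rw [hlam]
    rw [sum_sub_distrib, sum_sub_distrib, ← sum_mul, hwsum, hpa]
    simp
  have hs : ∑ v, (lam v - 1) = -1 := by
    rw [sum_sub_distrib, hsum]
    simp
    linarith
  constructor
  · intro H D
    have hpos : ∀ e ∈ T.edgeFinset, ∀ v ∈ univ.filter (· ∈ e),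
        0 < DeltaO T lam (Stmt13.side T v e) := by
      intro e he v hv
      rw [mem_filter] at hv
      obtain ⟨u, rfl⟩ := hv.2
      have hadj : T.Adj v u := by simpa using he
      have hp := hT.connected.pos_dist_of_ne hadj.ne
      refine (H _ ⟨v, ?_⟩ ?_ (Stmt13.side_connected T hT hadj)).1
      · rw [Stmt13.mem_side T hT hadj]
        simpa using hp
      · intro hc
        have := (Stmt13.mem_side T hT hadj u).1 (hc ▸ mem_univ u)
        simp at this
    have hnn : ∀ e ∈ T.edgeFinset, ∀ v ∈ univ.filter (· ∈ e),
        0 ≤ (D.a v e : ℚ) * DeltaO T lam (Stmt13.side T v e) := fun e he v hv =>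
      mul_nonneg (Nat.cast_nonneg _) (hpos e he v hv).le
    rw [Stmt13.defect_eq T hT lam hs]
    refine ⟨sum_nonneg fun e he => sum_nonneg (hnn e he), ?_⟩
    rw [sum_eq_zero_iff_of_nonneg fun e he => sum_nonneg (hnn e he)]
    constructor
    · intro h e he v hv
      have he' : e ∈ T.edgeFinset := SimpleGraph.mem_edgeFinset.2 he
      have hv' : v ∈ univ.filter (· ∈ e) := by simpa using hv
      have h1 := (sum_eq_zero_iff_of_nonneg (hnn e he')).1 (h e he') v hv'
      rcases mul_eq_zero.1 h1 with h2 | h2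
      · exact_mod_cast h2
      · exact absurd h2 (hpos e he' v hv').ne'
    · intro h e he
      refine sum_eq_zero fun v hv => ?_
      rw [h e (SimpleGraph.mem_edgeFinset.1 he) v (by simpa using hv)]
      simp
  · intro H B hB hB' _
    have h1 := Stmt13.delta_pos T hT lam H B hB hB'
    have h2 := Stmt13.delta_pos T hT lam H Bᶜ
      (by rwa [← compl_ne_univ_iff_nonempty, compl_compl])
      (by rwa [compl_ne_univ_iff_nonempty])
    have h3 := Stmt13.delta_compl T lam hsum B
    exact ⟨h1, by linarith⟩
end

section
/- Let G be a finite connected simple graph with vertex set V of size γ ≥ 2 and δ edges, g : V → ℕ, and w : V → ℚ with 0 < w(v) < 1 and ∑ w(v) = 1; set p_a = (∑ g(v)) + δ − γ + 1, λ(v) = 1 − g(v) − w(v)·(1 − p_a), and Δ_w(O_B) = (∑_{v∈B} λ(v)) − N(B) for B ⊆ V. Suppose w is numerically good: every depth-one datum (r,s,a,b) on G has defect Δ = (∑_{v∈V} r(v)·λ(v)) − ∑_e s(e) ≥ 0, with Δ = 0 if and only if a ≡ b ≡ 0. Then for every nonempty proper subset B ⊆ V, 0 < Δ_w(O_B) <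 δ_B. In particular, if p_a ≥ 2 then for every vertex v: (g(v) − 1)/(p_a − 1) < w(v) < (g(v) − 1 + deg(v))/(p_a − 1). -/
open Finset

variable {V : Type*} [Fintype V] [DecidableEq V]

/-- The depth-one datum of the structure sheaf of the subcurve `B`. -/
def datumO (G : SimpleGraph V) (B : Finset V) : DepthOneDatum G where
  r v := if v ∈ B then 1 else 0
  s e := if e ∈ B.sym2 then 1 else 0
  a v e := if v ∈ B ∧ e ∉ B.sym2 then 1 else 0
  compat := by
    intro e _ v hv
    by_cases h : e ∈ B.sym2
    · have : v ∈ B := Finset.mem_sym2_iff.1 h v hv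
      simp [h, this]
    · simp [h]

theorem datumO_defect (G : SimpleGraph V) [DecidableRel G.Adj] (lam : V → ℚ) (B : Finset V) :
    (datumO G B).defect lam = DeltaO G lam B := by
  simp only [DepthOneDatum.defect, DeltaO, insideCount, datumO]
  congr 1
  · simp [Finset.sum_ite_mem]
  · simp [Finset.sum_boole]

theorem datumO_not_locFree (G : SimpleGraph V) (hG : G.Connected) (B : Finset V)
    (hB : B.Nonempty) (hB' : B ≠ Finset.univ) : ¬ (datumO G B).LocFree := by
  obtain ⟨u, hu⟩ := hB
  obtain ⟨v, hv⟩ : ∃ v, v ∉ B := by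
    by_contra! h
    exact hB' (Finset.eq_univ_iff_forall.2 h)
  obtain ⟨p⟩ := hG.preconnected u v
  obtain ⟨d, _, h1, h2⟩ := p.exists_boundary_dart (B : Set V) (by simpa using hu) (by simpa using hv)
  intro h
  have := h s(d.fst, d.snd) d.adj d.fst (by simp)
  simp only [Finset.mem_coe] at h1 h2
  simp [datumO, h1, h2] at this

theorem count_split (G : SimpleGraph V) [DecidableRel G.Adj] (B : Finset V) :
    G.edgeFinset.card = insideCount G B + insideCount G Bᶜ + crossCount G B := by
  unfold insideCount crossCount
  rw [← Finset.card_filter_add_card_filter_not (s := G.edgeFinset) (fun e => e ∈ B.sym2),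
    ← Finset.card_filter_add_card_filter_not
      (s := G.edgeFinset.filter (fun e => e ∉ B.sym2)) (fun e => e ∈ Bᶜ.sym2),
    Finset.filter_filter, Finset.filter_filter, ← add_assoc]
  congr 3
  apply Finset.filter_congr
  intro e _
  constructor
  · exact fun h => h.2
  · refine fun h => ⟨fun h' => ?_, h⟩
    induction e with
    | _ x y =>
      simp only [Finset.mk_mem_sym2_iff, Finset.mem_compl] at h h'
      exact h.1 h'.1

theorem insideCount_singleton (G : SimpleGraph V) [DecidableRel G.Adj] (v : V) :
    insideCount G {v} = 0 := by
  unfold insideCount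
  rw [Finset.card_eq_zero, Finset.filter_eq_empty_iff]
  intro e he h
  induction e with
  | _ x y =>
    simp only [Finset.mk_mem_sym2_iff, Finset.mem_singleton] at h
    rw [h.1, h.2] at he
    simp at he

theorem crossCount_singleton (G : SimpleGraph V) [DecidableRel G.Adj] (v : V) :
    crossCount G {v} = G.degree v := by
  unfold crossCount
  rw [← G.card_incidenceFinset_eq_degree, G.incidenceFinset_eq_filter]
  congr 1
  apply Finset.filter_congr
  intro e he
  induction e with
  | _ x y =>
    have hne : x ≠ y := by
      rintro rfl
      simp at he
    simp only [Finset.mk_mem_sym2_iff, Finset.mem_singleton, Finset.mem_compl, Sym2.mem_iff]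
    grind

/-- if `w` is numerically good then `0 < Δ_w(O_B) < δ_B` for every
nonempty proper subset `B`; in particular, if `p_a ≥ 2` then
`(g v − 1)/(p_a − 1) < w v < (g v − 1 + deg v)/(p_a − 1)` for every vertex. -/
theorem stmt_14 (G : SimpleGraph V) [DecidableRel G.Adj]
    (hG : G.Connected) (hγ : 2 ≤ Fintype.card V)
    (g : V → ℕ) (w : V → ℚ) (hw : ∀ v, 0 < w v ∧ w v < 1) (hwsum : ∑ v, w v = 1)
    (pa : ℚ)
    (hpa : pa = (∑ v, (g v : ℚ)) + (G.edgeFinset.card : ℚ) - (Fintype.card V : ℚ) + 1)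
    (lam : V → ℚ) (hlam : ∀ v, lam v = 1 - (g v : ℚ) - w v * (1 - pa))
    (hgood : ∀ D : DepthOneDatum G,
      0 ≤ D.defect lam ∧ (D.defect lam = 0 ↔ D.LocFree)) :
    (∀ B : Finset V, B.Nonempty → B ≠ Finset.univ →
        0 < DeltaO G lam B ∧ DeltaO G lam B < (crossCount G B : ℚ))
    ∧ (2 ≤ pa → ∀ v : V,
        ((g v : ℚ) - 1) / (pa - 1) < w v
        ∧ w v < ((g v : ℚ) - 1 + (G.degree v : ℚ)) / (pa - 1)) := by
  have pos : ∀ B : Finset V, B.Nonempty → B ≠ Finset.univ → 0 < DeltaO G lam B := by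
    intro B hB hB'
    have h := hgood (datumO G B)
    rw [datumO_defect] at h
    refine lt_of_le_of_ne h.1 fun h0 => ?_
    exact datumO_not_locFree G hG B hB hB' (h.2.1 h0.symm)
  have hsum : ∑ v, lam v = (G.edgeFinset.card : ℚ) := by
    simp only [hlam, Finset.sum_sub_distrib, ← Finset.sum_mul, hwsum]
    simp only [Finset.sum_const, Finset.card_univ, nsmul_eq_mul]
    rw [hpa]
    ring
  have main : ∀ B : Finset V, B.Nonempty → B ≠ Finset.univ →
      0 < DeltaO G lam B ∧ DeltaO G lam B < (crossCount G B : ℚ) := by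
    intro B hB hB'
    refine ⟨pos B hB hB', ?_⟩
    have h := pos Bᶜ (by
      rw [Finset.nonempty_iff_ne_empty]
      simpa using hB') (by simpa using hB.ne_empty)
    have h2 : (G.edgeFinset.card : ℚ) = insideCount G B + insideCount G Bᶜ + crossCount G B := by
      exact_mod_cast count_split G B
    have h3 := Finset.sum_add_sum_compl B lam
    unfold DeltaO at *
    linarith
  refine ⟨main, fun h2 v => ?_⟩
  have h := main {v} (Finset.singleton_nonempty v) (by
    intro h
    have := congrArg Finset.card h
    simp only [Finset.card_singleton, Finset.card_univ] at this
    omega)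
  rw [crossCount_singleton, DeltaO, insideCount_singleton, Finset.sum_singleton, hlam] at h
  have hp : 0 < pa - 1 := by linarith
  rw [div_lt_iff₀ hp, lt_div_iff₀ hp]
  push_cast at h
  constructor <;> linarith [h.1, h.2]
end

section
/- Let T be a finite tree (connected acyclic simple graph) with vertex set V of size γ ≥ 2 and δ = γ − 1 edges, let g ≡ 0 (so p_a = 0), and let w : V → ℚ be any function with 0 < w(v) < 1 and ∑ w(v) = 1. Set λ(v) = 1 − w(v). Then every depth-one datum (r,s,a,b) on T has defect Δ = (∑_{v∈V} r(v)·λ(v)) − ∑_e s(e) ≥ 0, with Δ = 0 if and only if a(e) = b(e) = 0 for every edge e. -/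
open Finset

variable {V : Type*} [Fintype V] [DecidableEq V]

theorem exists_parent_aux {V : Type*} (T : SimpleGraph V) (hT : T.Connected) (ρ v : V)
    (h : v ≠ ρ) : ∃ u, T.Adj v u ∧ T.dist u ρ + 1 ≤ T.dist v ρ := by
  obtain ⟨p, hp⟩ := hT.exists_walk_length_eq_dist v ρ
  cases p with
  | nil => exact absurd rfl h
  | @cons _ u _ hadj q =>
    refine ⟨u, hadj, ?_⟩
    rw [← hp, SimpleGraph.Walk.length_cons]
    have := SimpleGraph.dist_le q
    omega

theorem sum_edges_le_aux (T : SimpleGraph V) [DecidableRel T.Adj]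
    (hT : T.IsTree) (ρ : V) (D : DepthOneDatum T) :
    ∑ e ∈ T.edgeFinset, (D.s e : ℚ) + D.r ρ ≤ ∑ v, (D.r v : ℚ) := by
  have hex : ∀ v, ∃ u, v ≠ ρ → T.Adj v u ∧ T.dist u ρ + 1 ≤ T.dist v ρ := by
    intro v
    by_cases h : v = ρ
    · exact ⟨v, fun h' => absurd h h'⟩
    · obtain ⟨u, hu⟩ := exists_parent_aux T hT.connected ρ v h
      exact ⟨u, fun _ => hu⟩
  choose p hp using hex
  have hinj : Set.InjOn (fun v => s(v, p v)) ((univ.erase ρ : Finset V) : Set V) := by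
    intro x hx y hy hxy
    have hx' : x ≠ ρ := by simpa using hx
    have hy' : y ≠ ρ := by simpa using hy
    have h1 := (hp x hx').2
    have h2 := (hp y hy').2
    simp only [Sym2.eq_iff] at hxy
    rcases hxy with h | h
    · exact h.1
    · rw [h.2] at h1
      rw [← h.1] at h2
      omega
  have himg : (univ.erase ρ).image (fun v => s(v, p v)) = T.edgeFinset := by
    apply Finset.eq_of_subset_of_card_le
    · intro e he
      obtain ⟨v, hv, rfl⟩ := Finset.mem_image.1 he
      rw [SimpleGraph.mem_edgeFinset, SimpleGraph.mem_edgeSet]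
      exact (hp v (by simpa using hv)).1
    · rw [Finset.card_image_of_injOn hinj, Finset.card_erase_of_mem (mem_univ _), card_univ]
      have := hT.card_edgeFinset
      omega
  rw [← himg, Finset.sum_image hinj, ← Finset.sum_erase_add _ _ (mem_univ ρ)]
  gcongr with v hv
  have := D.compat s(v, p v) ((hp v (by simpa using hv)).1) v (by simp)
  omega

/-- on a tree `T` with all genera `0` (so `p_a = 0` and
`λ v = 1 − w v`), every polarization `w` is numerically good: every depth-one datum
has nonnegative defect, zero iff locally free. -/
theorem stmt_15 (T : SimpleGraph V) [DecidableRel T.Adj]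
    (hT : T.IsTree) (hγ : 2 ≤ Fintype.card V)
    (w : V → ℚ) (hw : ∀ v, 0 < w v ∧ w v < 1) (hwsum : ∑ v, w v = 1)
    (D : DepthOneDatum T) :
    0 ≤ D.defect (fun v => 1 - w v)
    ∧ (D.defect (fun v => 1 - w v) = 0 ↔ D.LocFree) := by
  have hne : Nonempty V := hT.connected.nonempty
  obtain ⟨ρ, hρ⟩ := Finite.exists_max D.r
  have h1 := sum_edges_le_aux T hT ρ D
  have hcard : (T.edgeFinset.card : ℚ) + 1 = Fintype.card V := by
    exact_mod_cast hT.card_edgeFinset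
  have hdef : D.defect (fun v => 1 - w v) = (∑ v, (D.r v : ℚ))
      - (∑ e ∈ T.edgeFinset, (D.s e : ℚ) + D.r ρ) + ∑ v, w v * ((D.r ρ : ℚ) - D.r v) := by
    have e1 : ∑ v, w v * ((D.r ρ : ℚ) - D.r v) = D.r ρ - ∑ v, (D.r v : ℚ) * w v := by
      simp only [mul_sub, Finset.sum_sub_distrib, ← Finset.sum_mul, hwsum, one_mul, mul_comm]
    rw [e1]
    simp only [DepthOneDatum.defect, mul_sub, Finset.sum_sub_distrib, mul_one]
    ring
  have hterm : ∀ v ∈ (univ : Finset V), 0 ≤ w v * ((D.r ρ : ℚ) - D.r v) := by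
    intro v _
    have : (D.r v : ℚ) ≤ D.r ρ := by exact_mod_cast hρ v
    exact mul_nonneg (hw v).1.le (sub_nonneg.2 this)
  have h2 := Finset.sum_nonneg hterm
  refine ⟨by rw [hdef]; linarith, ?_, ?_⟩
  · intro h0
    rw [hdef] at h0
    have h3 : ∑ v, w v * ((D.r ρ : ℚ) - D.r v) = 0 := by linarith
    rw [Finset.sum_eq_zero_iff_of_nonneg hterm] at h3
    have hr : ∀ v, D.r v = D.r ρ := by
      intro v
      rcases mul_eq_zero.1 (h3 v (mem_univ v)) with h | h
      · exact absurd h (hw v).1.ne'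
      · have : (D.r v : ℚ) = D.r ρ := by linarith
        exact_mod_cast this
    have h4 : ∑ e ∈ T.edgeFinset, ((D.r ρ : ℚ) - D.s e) = 0 := by
      have h5 : ∑ v, (D.r v : ℚ) = Fintype.card V * D.r ρ := by simp [hr]
      rw [Finset.sum_sub_distrib, Finset.sum_const, nsmul_eq_mul]
      rw [h5, ← hcard] at h0 h1
      linarith
    have h6 : ∀ e ∈ T.edgeFinset, 0 ≤ (D.r ρ : ℚ) - D.s e := by
      intro e he
      rw [SimpleGraph.mem_edgeFinset] at he
      have := D.compat e he _ e.out_fst_mem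
      rw [hr] at this
      rw [this]
      push_cast
      linarith [Nat.cast_nonneg (α := ℚ) (D.a (Quot.out e).1 e)]
    rw [Finset.sum_eq_zero_iff_of_nonneg h6] at h4
    intro e he v hv
    have h7 := h4 e (SimpleGraph.mem_edgeFinset.2 he)
    have h8 : D.r ρ = D.s e := by
      have : (D.r ρ : ℚ) = D.s e := by linarith
      exact_mod_cast this
    have := D.compat e he v hv
    rw [hr] at this
    omega
  · intro hL
    have hs : ∀ e ∈ T.edgeSet, ∀ v ∈ e, D.r v = D.s e := by
      intro e he v hv
      rw [D.compat e he v hv, hL e he v hv, add_zero]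
    have hr : ∀ v, D.r v = D.r ρ := by
      intro v
      obtain ⟨q⟩ := hT.connected.preconnected v ρ
      clear hρ h1 hdef hterm h2
      induction q with
      | nil => rfl
      | @cons x y z hadj q ih =>
        rw [← ih, hs s(x, y) hadj x (by simp), hs s(x, y) hadj y (by simp)]
    have h5 : ∑ v, (D.r v : ℚ) = Fintype.card V * D.r ρ := by simp [hr]
    have h6 : ∑ e ∈ T.edgeFinset, (D.s e : ℚ) = T.edgeFinset.card * D.r ρ := by
      rw [← nsmul_eq_mul, ← Finset.sum_const]
      refine Finset.sum_congr rfl fun e he => ?_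
      rw [← hs e (SimpleGraph.mem_edgeFinset.1 he) _ e.out_fst_mem, hr]
    rw [hdef, h5, h6, ← hcard]
    simp only [hr, sub_self, mul_zero, Finset.sum_const_zero]
    ring
end

section
/- Let G be the cycle graph on γ ≥ 3 vertices (so δ = γ edges), let g ≡ 0 (so p_a = 1), and let w : V → ℚ be any function with 0 < w(v) < 1 and ∑ w(v) = 1. Set λ(v) = 1 − g(v) − w(v)·(1 − p_a) = 1. Then every depth-one datum (r,s,a,b) on G has defect Δ = (∑_{v∈V} r(v)) − ∑_e s(e) ≥ 0, with Δ = 0 if and only if a(e) = b(e) = 0 for every edge e. -/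
open Finset

variable {V : Type*} [Fintype V] [DecidableEq V]

theorem cycle_edge_sum (n : ℕ) (f : Sym2 (Fin (n+3)) → ℚ) :
    ∑ e ∈ (SimpleGraph.cycleGraph (n+3)).edgeFinset, f e = ∑ i : Fin (n+3), f s(i, i+1) := by
  symm
  refine Finset.sum_bij (fun i _ => s(i, i+1)) ?_ ?_ ?_ ?_
  · intro i _
    simp [SimpleGraph.cycleGraph_adj]
  · intro i _ j _ h
    rw [Sym2.eq_iff] at h
    rcases h with h | ⟨h1, h2⟩
    · exact h.1
    · exfalso
      rw [h1, add_assoc] at h2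
      have h3 : (1 + 1 : Fin (n+3)) = 0 := by simpa using h2
      have h4 := congrArg Fin.val h3
      simp [Fin.val_add] at h4
      rw [Nat.mod_eq_of_lt (by omega)] at h4
      omega
  · intro e
    induction e using Sym2.ind with
    | _ x y =>
      intro h
      rw [SimpleGraph.mem_edgeFinset, SimpleGraph.mem_edgeSet, SimpleGraph.cycleGraph_adj] at h
      rcases h with h | h
      · refine ⟨y, Finset.mem_univ _, ?_⟩
        rw [← h, add_sub_cancel, Sym2.eq_swap]
      · refine ⟨x, Finset.mem_univ _, ?_⟩
        rw [← h, add_sub_cancel]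
  · intro i _
    rfl

/-- on the cycle graph with `γ ≥ 3` vertices and all genera `0`
(so `p_a = 1` and `λ ≡ 1`), every polarization `w` is numerically good: every
depth-one datum has defect `(∑ v, r v) − ∑ e, s e ≥ 0`, zero iff locally free. -/
theorem stmt_16 (γ : ℕ) (hγ : 3 ≤ γ)
    (w : Fin γ → ℚ) (hw : ∀ v, 0 < w v ∧ w v < 1) (hwsum : ∑ v, w v = 1)
    (D : DepthOneDatum (SimpleGraph.cycleGraph γ)) :
    0 ≤ D.defect (fun _ => (1 : ℚ))
    ∧ (D.defect (fun _ => (1 : ℚ)) = 0 ↔ D.LocFree) := by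
  obtain ⟨n, rfl⟩ : ∃ n, γ = n + 3 := ⟨γ - 3, by omega⟩
  have hmem : ∀ i : Fin (n+3), s(i, i+1) ∈ (SimpleGraph.cycleGraph (n+3)).edgeSet := by
    intro i
    simp [SimpleGraph.cycleGraph_adj]
  have h1 : D.defect (fun _ => (1 : ℚ)) = ∑ i : Fin (n+3), (D.a i s(i, i+1) : ℚ) := by
    unfold DepthOneDatum.defect
    rw [cycle_edge_sum, ← Finset.sum_sub_distrib]
    refine Finset.sum_congr rfl fun i _ => ?_
    rw [D.compat _ (hmem i) i (by simp)]
    push_cast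
    ring
  have h2 : D.defect (fun _ => (1 : ℚ)) = ∑ i : Fin (n+3), (D.a (i+1) s(i, i+1) : ℚ) := by
    unfold DepthOneDatum.defect
    rw [cycle_edge_sum, ← Equiv.sum_comp (Equiv.addRight (1 : Fin (n+3))),
      ← Finset.sum_sub_distrib]
    refine Finset.sum_congr rfl fun i _ => ?_
    rw [Equiv.coe_addRight, D.compat _ (hmem i) (i+1) (by simp)]
    push_cast
    ring
  refine ⟨by rw [h1]; positivity, fun h => ?_, fun h => ?_⟩
  · have k1 : ∀ i, D.a i s(i, i+1) = 0 := by
      rw [h1, Finset.sum_eq_zero_iff_of_nonneg (fun _ _ => by positivity)] at h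
      intro i
      exact_mod_cast h i (Finset.mem_univ _)
    have k2 : ∀ i, D.a (i+1) s(i, i+1) = 0 := by
      rw [h2, Finset.sum_eq_zero_iff_of_nonneg (fun _ _ => by positivity)] at h
      intro i
      exact_mod_cast h i (Finset.mem_univ _)
    have key : ∀ i, ∀ v ∈ s(i, i+1), D.a v s(i, i+1) = 0 := by
      intro i v hv
      rcases Sym2.mem_iff.1 hv with rfl | rfl
      · exact k1 _
      · exact k2 _
    intro e
    induction e using Sym2.ind with
    | _ x y =>
      intro he
      rw [SimpleGraph.mem_edgeSet, SimpleGraph.cycleGraph_adj] at he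
      rcases he with he | he
      · have : x = y + 1 := by rw [← he, add_sub_cancel]
        rw [this, Sym2.eq_swap]
        exact key y
      · have : y = x + 1 := by rw [← he, add_sub_cancel]
        rw [this]
        exact key x
  · rw [h1]
    refine Finset.sum_eq_zero fun i _ => ?_
    rw [h _ (hmem i) i (by simp), Nat.cast_zero]
end

section
/- Let T be a finite tree (connected acyclic simple graph) with vertex set V of size γ ≥ 2 and δ = γ − 1 edges, and let g : V → ℕ have ∑_{v∈V} g(v) = 1 (so exactly one vertex v₀ has g(v₀) = 1 and all others have genus 0; hence p_a = 1). Then for every w : V → ℚ with 0 < w(v) < 1 and ∑ w(v) = 1, setting λ(v) = 1 − g(v), there exists a depth-one datum (r,s,a,b) on T which is not locally free (i.e. a(e) ≠ 0 or b(e) ≠ 0 for some edge e) but has defect Δ = (∑_{v∈V} r(v)·λ(v)) − ∑_e s(e) = 0. In other words, no polarization w on T is numerically good. -/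
open Finset

variable {V : Type*} [Fintype V] [DecidableEq V]

/-- on a tree `T` with total genus `1` (so `p_a = 1` and
`λ v = 1 − g v`), no polarization is numerically good: there is a depth-one datum
which is not locally free but has defect `0`. -/
theorem stmt_17 (T : SimpleGraph V) [DecidableRel T.Adj]
    (hT : T.IsTree) (hγ : 2 ≤ Fintype.card V)
    (g : V → ℕ) (hg : ∑ v, g v = 1)
    (w : V → ℚ) (hw : ∀ v, 0 < w v ∧ w v < 1) (hwsum : ∑ v, w v = 1) :
    ∃ D : DepthOneDatum T,
      ¬ D.LocFree ∧ D.defect (fun v => 1 - (g v : ℚ)) = 0 := by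
  classical
  have hle : ∀ v, g v ≤ 1 := fun v => by
    rw [← hg]
    exact Finset.single_le_sum (f := g) (fun i _ => Nat.zero_le _) (Finset.mem_univ v)
  obtain ⟨v₀, hv₀⟩ : ∃ v, g v ≠ 0 := by
    by_contra! h
    simp [h] at hg
  refine ⟨⟨g, fun _ => 0, fun v _ => g v, fun _ _ v _ => by simp⟩, ?_, ?_⟩
  · intro h
    haveI : Nontrivial V := Fintype.one_lt_card_iff_nontrivial.mp hγ
    obtain ⟨u, hu⟩ := hT.connected.preconnected.exists_adj_of_nontrivial v₀
    exact hv₀ (h s(v₀, u) hu v₀ (by simp))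
  · simp only [DepthOneDatum.defect, Nat.cast_zero, Finset.sum_const_zero, sub_zero]
    refine Finset.sum_eq_zero fun v _ => ?_
    have := hle v
    interval_cases h : g v <;> simp
end

section
/- Let G be a finite connected simple graph with vertex set V of size γ ≥ 2 and δ edges, and let g : V → ℕ satisfy p_a := (∑_{v∈V} g(v)) + δ − γ + 1 = 1. For B ⊆ V set D(B) = (∑_{v∈B} (1 − g(v))) − N(B) (which equals Δ_w(O_B) for every polarization w, since 1 − p_a = 0). Then: (1) for every nonempty proper subset B ⊆ V, 0 ≤ D(B) ≤ δ_B; (2) the strict inequalities 0 < D(B) < δ_B hold for every nonempty proper subset B with connected induced subgraph if and only if g ≡ 0 and G is a cycle graph. -/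
open Finset

variable {V : Type*} [Fintype V] [DecidableEq V]

theorem aux_handshake (G : SimpleGraph V) [DecidableRel G.Adj] (B : Finset V) :
    ∑ v ∈ B, G.degree v = 2 * insideCount G B + crossCount G B := by
  have h1 : ∀ v, G.degree v = ∑ e ∈ G.edgeFinset, if v ∈ e then 1 else 0 := by
    intro v
    rw [← G.card_incidenceFinset_eq_degree, G.incidenceFinset_eq_filter, Finset.card_filter]
  simp only [h1]
  rw [Finset.sum_comm]
  unfold insideCount crossCount
  rw [Finset.card_filter, Finset.card_filter, Finset.mul_sum, ← Finset.sum_add_distrib]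
  refine Finset.sum_congr rfl ?_
  intro e he
  induction e using Sym2.ind with
  | _ x y =>
    have hxy : x ≠ y := by
      rw [SimpleGraph.mem_edgeFinset, SimpleGraph.mem_edgeSet] at he
      exact he.ne
    have h2 : ∀ v, (if v ∈ s(x, y) then 1 else 0 : ℕ)
        = (if v = x then 1 else 0) + (if v = y then 1 else 0) := by
      intro v
      simp only [Sym2.mem_iff]
      by_cases hx : v = x <;> by_cases hy : v = y <;> simp_all
    simp only [h2, Finset.sum_add_distrib, Finset.sum_ite_eq', Finset.mk_mem_sym2_iff,
      Finset.mem_compl]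
    by_cases hx : x ∈ B <;> by_cases hy : y ∈ B <;> simp [hx, hy]

theorem aux_split (G : SimpleGraph V) [DecidableRel G.Adj] (B : Finset V) :
    insideCount G B + insideCount G Bᶜ + crossCount G B = G.edgeFinset.card := by
  unfold insideCount crossCount
  rw [Finset.card_filter, Finset.card_filter, Finset.card_filter, Finset.card_eq_sum_ones,
    ← Finset.sum_add_distrib, ← Finset.sum_add_distrib]
  refine Finset.sum_congr rfl ?_
  intro e he
  induction e using Sym2.ind with
  | _ x y =>
    simp only [Finset.mk_mem_sym2_iff, Finset.mem_compl]
    by_cases hx : x ∈ B <;> by_cases hy : y ∈ B <;> simp [hx, hy]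

theorem aux_parent (G : SimpleGraph V) (hG : G.Connected) (b v : V) (h : v ≠ b) :
    ∃ w, G.Adj v w ∧ G.dist w b + 1 = G.dist v b := by
  obtain ⟨p, hp⟩ := hG.exists_walk_length_eq_dist v b
  cases p with
  | nil => exact absurd rfl h
  | @cons _ w _ hadj q =>
    refine ⟨w, hadj, ?_⟩
    have h1 := SimpleGraph.dist_le q
    simp only [SimpleGraph.Walk.length_cons] at hp
    have h2 := SimpleGraph.dist_le (SimpleGraph.Walk.cons hadj
      (hG.exists_walk_length_eq_dist w b).choose)
    have h3 := (hG.exists_walk_length_eq_dist w b).choose_spec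
    simp only [SimpleGraph.Walk.length_cons] at h2
    omega

theorem aux_key (G : SimpleGraph V) [DecidableRel G.Adj] (hG : G.Connected) (B : Finset V)
    (hB : B.Nonempty) : insideCount G B + Fintype.card V ≤ G.edgeFinset.card + B.card := by
  obtain ⟨b, hb⟩ := hB
  have h : ∀ v, ∃ w, v ≠ b → G.Adj v w ∧ G.dist w b + 1 = G.dist v b := by
    intro v
    by_cases hv : v = b
    · exact ⟨v, fun h => absurd hv h⟩
    · obtain ⟨w, hw⟩ := aux_parent G hG b v hv
      exact ⟨w, fun _ => hw⟩
  choose f hf using h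
  have h1 : (Bᶜ).card ≤ (G.edgeFinset.filter (fun e => ¬ e ∈ B.sym2)).card := by
    refine Finset.card_le_card_of_injOn (fun v => s(v, f v)) ?_ ?_
    · intro v hv
      have hv' : v ∉ B := by simpa using hv
      have hvb : v ≠ b := fun h => hv' (h ▸ hb)
      simp [hv', (hf v hvb).1]
    · intro v hv u hu huv
      have hv' : v ∉ B := by simpa using hv
      have hvb : v ≠ b := fun h => hv' (h ▸ hb)
      have hu' : u ∉ B := by simpa using hu
      have hub : u ≠ b := fun h => hu' (h ▸ hb)
      have h1 := (hf v hvb).2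
      have h2 := (hf u hub).2
      simp only [Sym2.eq_iff] at huv
      rcases huv with h | ⟨h3, h4⟩
      · exact h.1
      · rw [h4] at h1
        rw [← h3] at h2
        omega
  have h2 := Finset.card_filter_add_card_filter_not (s := G.edgeFinset) (fun e => e ∈ B.sym2)
  have h3 := Finset.card_add_card_compl B
  unfold insideCount
  omega

theorem aux_cross_pos (G : SimpleGraph V) [DecidableRel G.Adj] (hG : G.Connected) (B : Finset V)
    (hB : B.Nonempty) (hB' : B ≠ Finset.univ) : 0 < crossCount G B := by
  obtain ⟨b, hb⟩ := hB
  obtain ⟨c, hc⟩ : ∃ c, c ∉ B := by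
    by_contra hcon
    push Not at hcon
    exact hB' (Finset.eq_univ_iff_forall.mpr hcon)
  obtain ⟨p⟩ := hG.preconnected b c
  obtain ⟨d, hd, h1, h2⟩ := p.exists_boundary_dart (B : Set V) (by simpa using hb) (by simpa using hc)
  refine Finset.card_pos.mpr ⟨s(d.fst, d.snd), ?_⟩
  simp only [Finset.mem_coe] at h1 h2
  simp [h1, h2, d.adj]

theorem aux_cycle (G : SimpleGraph V) [DecidableRel G.Adj] (hG : G.Connected)
    (hdeg : ∀ v, G.degree v = 2) :
    ∃ n, 3 ≤ n ∧ Nonempty (G ≃g SimpleGraph.cycleGraph n) := by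
  have hcyc : G.IsCycles := by
    intro v _
    rw [Set.ncard_eq_toFinset_card']
    exact hdeg v
  obtain ⟨v⟩ := hG.nonempty
  have hne : (G.neighborSet v).Nonempty := by
    have : 0 < G.degree v := by rw [hdeg]; norm_num
    obtain ⟨w, hw⟩ := (G.degree_pos_iff_exists_adj v).mp this
    exact ⟨w, hw⟩
  obtain ⟨p, hp, hpv⟩ := hcyc.exists_cycle_toSubgraph_verts_eq_connectedComponentSupp
    (c := G.connectedComponentMk v) (by simp) hne
  have hall : ∀ w, w ∈ p.support.tail := by
    intro w
    have : w ∈ p.toSubgraph.verts := by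
      rw [hpv]
      simpa using hG.preconnected w v
    rw [SimpleGraph.Walk.mem_verts_toSubgraph] at this
    rw [SimpleGraph.Walk.mem_support_iff] at this
    rcases this with rfl | h
    · exact SimpleGraph.Walk.end_mem_tail_support hp.not_nil
    · exact h
  have hcard : Fintype.card V ≤ p.length := by
    have h1 : (Finset.univ : Finset V) ⊆ p.support.tail.toFinset := by
      intro w _
      simpa using hall w
    have h2 := Finset.card_le_card h1
    have h3 := List.toFinset_card_le p.support.tail
    simp at h2 h3
    omega
  have h3 := hp.three_le_length
  refine ⟨p.length, h3, ?_⟩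
  obtain ⟨f⟩ := (SimpleGraph.cycleGraph_isContained_iff (G := G) h3).mpr ⟨v, p, hp, rfl⟩
  have hinj : Function.Injective f := f.injective
  have hbij : Function.Bijective f := by
    rw [Fintype.bijective_iff_injective_and_card]
    refine ⟨hinj, le_antisymm (Fintype.card_le_of_injective _ hinj) ?_⟩
    simpa using hcard
  obtain ⟨m, hm⟩ : ∃ m, p.length = m + 3 := ⟨p.length - 3, by omega⟩
  have hd2 : ∀ x, (SimpleGraph.cycleGraph p.length).degree x = 2 := by
    rw [hm]
    intro x
    exact SimpleGraph.cycleGraph_degree_three_le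
  have hnb : ∀ x, ((SimpleGraph.cycleGraph p.length).neighborFinset x).image f
      = G.neighborFinset (f x) := by
    intro x
    apply Finset.eq_of_subset_of_card_le
    · intro y hy
      simp only [Finset.mem_image, SimpleGraph.mem_neighborFinset] at hy ⊢
      obtain ⟨z, hz, rfl⟩ := hy
      exact f.toHom.map_adj hz
    · rw [Finset.card_image_of_injective _ hinj, SimpleGraph.card_neighborFinset_eq_degree,
        SimpleGraph.card_neighborFinset_eq_degree, hdeg, hd2]
  refine ⟨SimpleGraph.Iso.symm ⟨Equiv.ofBijective f hbij, ?_⟩⟩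
  intro x y
  simp only [Equiv.ofBijective_apply]
  rw [← SimpleGraph.mem_neighborFinset, ← hnb, hinj.mem_finset_image,
    SimpleGraph.mem_neighborFinset]

/-- for a connected dual graph with `p_a = 1` and
`D(B) = (∑_{v∈B} (1 − g v)) − N(B)`: (1) `0 ≤ D(B) ≤ δ_B` for every nonempty proper
`B`; (2) the strict inequalities hold for every nonempty proper connected `B` iff
`g ≡ 0` and `G` is a cycle graph. -/
theorem stmt_18 (G : SimpleGraph V) [DecidableRel G.Adj]
    (hG : G.Connected) (hγ : 2 ≤ Fintype.card V)
    (g : V → ℕ)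
    (hpa : (∑ v, (g v : ℚ)) + (G.edgeFinset.card : ℚ) - (Fintype.card V : ℚ) + 1 = 1) :
    (∀ B : Finset V, B.Nonempty → B ≠ Finset.univ →
        0 ≤ DeltaO G (fun v => 1 - (g v : ℚ)) B
        ∧ DeltaO G (fun v => 1 - (g v : ℚ)) B ≤ (crossCount G B : ℚ))
    ∧ ((∀ B : Finset V, B.Nonempty → B ≠ Finset.univ →
          (G.induce (B : Set V)).Connected →
          0 < DeltaO G (fun v => 1 - (g v : ℚ)) B
          ∧ DeltaO G (fun v => 1 - (g v : ℚ)) B < (crossCount G B : ℚ))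
        ↔ ((∀ v, g v = 0)
            ∧ ∃ n, 3 ≤ n ∧ Nonempty (G ≃g SimpleGraph.cycleGraph n))) := by
  have hpa' : (∑ v, g v) + G.edgeFinset.card = Fintype.card V := by
    have : ((∑ v, g v : ℕ) : ℚ) + (G.edgeFinset.card : ℚ) = (Fintype.card V : ℚ) := by
      push_cast
      linarith
    exact_mod_cast this
  have hform : ∀ B : Finset V, DeltaO G (fun v => 1 - (g v : ℚ)) B
      = (B.card : ℚ) - ((∑ v ∈ B, g v : ℕ) : ℚ) - (insideCount G B : ℚ) := by
    intro B
    simp [DeltaO, Finset.sum_sub_distrib]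
  have hsum : ∀ B : Finset V, DeltaO G (fun v => 1 - (g v : ℚ)) B
      + DeltaO G (fun v => 1 - (g v : ℚ)) Bᶜ = crossCount G B := by
    intro B
    rw [hform, hform]
    have h1 := aux_split G B
    have h2 := Finset.card_add_card_compl B
    have h3 := Finset.sum_add_sum_compl B g
    have h1' : (insideCount G B : ℚ) + insideCount G Bᶜ + crossCount G B = G.edgeFinset.card := by
      exact_mod_cast h1
    have h2' : (B.card : ℚ) + (Bᶜ.card : ℚ) = Fintype.card V := by exact_mod_cast h2
    have h3' : ((∑ v ∈ B, g v : ℕ) : ℚ) + ((∑ v ∈ Bᶜ, g v : ℕ) : ℚ) = ((∑ v, g v : ℕ) : ℚ) := by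
      exact_mod_cast h3
    have h4' : ((∑ v, g v : ℕ) : ℚ) + (G.edgeFinset.card : ℚ) = (Fintype.card V : ℚ) := by
      exact_mod_cast hpa'
    linarith
  have hnn : ∀ B : Finset V, B.Nonempty → 0 ≤ DeltaO G (fun v => 1 - (g v : ℚ)) B := by
    intro B hB
    rw [hform]
    have h1 := aux_key G hG B hB
    have h2 : ∑ v ∈ B, g v ≤ ∑ v, g v :=
      Finset.sum_le_sum_of_subset (Finset.subset_univ B)
    have h3 : ((∑ v ∈ B, g v : ℕ) : ℚ) + insideCount G B ≤ B.card := by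
      have : (∑ v ∈ B, g v) + insideCount G B ≤ B.card := by omega
      exact_mod_cast this
    linarith
  refine ⟨?_, ?_, ?_⟩
  · intro B hB hB'
    refine ⟨hnn B hB, ?_⟩
    have h1 := hsum B
    have h2 := hnn Bᶜ (by
      rw [Finset.nonempty_iff_ne_empty]
      intro h
      exact hB' (by simpa using h))
    linarith
  · intro H
    have hv : ∀ v, g v = 0 ∧ 2 ≤ G.degree v := by
      intro v
      have hconn : (G.induce (({v} : Finset V) : Set V)).Connected := by
        rw [Finset.coe_singleton]
        exact SimpleGraph.Connected.of_subsingleton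
      have hne : ({v} : Finset V) ≠ Finset.univ := by
        intro h
        have := congrArg Finset.card h
        rw [Finset.card_singleton, Finset.card_univ] at this
        omega
      have h1 := H {v} (Finset.singleton_nonempty v) hne hconn
      have h0 : insideCount G {v} = 0 := by
        unfold insideCount
        rw [Finset.card_eq_zero, Finset.filter_eq_empty_iff]
        intro e he
        induction e using Sym2.ind with
        | _ x y =>
          rw [SimpleGraph.mem_edgeFinset, SimpleGraph.mem_edgeSet] at he
          simp only [Finset.mk_mem_sym2_iff, Finset.mem_singleton]
          rintro ⟨rfl, rfl⟩
          exact he.ne rfl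
      have h2 := aux_handshake G {v}
      rw [hform, h0] at h1
      rw [h0] at h2
      simp only [Finset.sum_singleton, Finset.card_singleton] at h1 h2
      obtain ⟨h3, h4⟩ := h1
      have h5 : g v < 1 := by
        have : (g v : ℚ) < 1 := by push_cast at h3; linarith
        exact_mod_cast this
      have h6 : g v = 0 := by omega
      refine ⟨h6, ?_⟩
      rw [h6] at h4
      have : 1 < crossCount G {v} := by
        have : (1 : ℚ) < crossCount G {v} := by push_cast at h4; linarith
        exact_mod_cast this
      omega
    refine ⟨fun v => (hv v).1, aux_cycle G hG ?_⟩
    have hE : G.edgeFinset.card = Fintype.card V := by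
      simpa [fun v => (hv v).1] using hpa'
    have hs := G.sum_degrees_eq_twice_card_edges
    have hs' : ∑ v : V, 2 = ∑ v, G.degree v := by
      rw [hs, hE]
      simp [mul_comm]
    intro v
    exact ((Finset.sum_eq_sum_iff_of_le (fun v _ => (hv v).2)).mp hs' v (Finset.mem_univ v)).symm
  · rintro ⟨hg, n, hn, ⟨φ⟩⟩ B hB hB' _
    obtain ⟨m, rfl⟩ : ∃ m, n = m + 3 := ⟨n - 3, by omega⟩
    have hdeg : ∀ v, G.degree v = 2 := by
      intro v
      rw [← φ.degree_eq v]
      exact SimpleGraph.cycleGraph_degree_three_le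
    have h1 := aux_handshake G B
    have h2 := aux_cross_pos G hG B hB hB'
    simp only [hdeg, Finset.sum_const, smul_eq_mul] at h1
    rw [hform]
    simp only [hg, Finset.sum_const_zero, Nat.cast_zero]
    have h1' : (B.card : ℚ) * 2 = 2 * insideCount G B + crossCount G B := by exact_mod_cast h1
    have h2' : (0 : ℚ) < crossCount G B := by exact_mod_cast h2
    constructor <;> linarith
end
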